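/- For every simple graph G (with at least one edge): π̂_3(G) = 1 − 1/(χ(G)−1) if χ(G) ≥ 4; π̂_3(G) = 0 if G is triangle-free, there exists a vertex v of G such that G − v is bipartite, and there exists a bipartite subgraph B of G with bipartition (U₁,U₂) such that E(G) \ E(B) is a (possibly empty) matching whose edges all lie inside one part of B; and π̂_3(G) = 1/2 in all remaining cases. -/

import Mathlib

/-- A hypergraph `H` (given by its finite collection of hyperedges on vertex type `β`)
contains a Berge copy of the graph `G`: there is an injection of the vertices of `G`
and an injection of the edges of `G` into hyperedges of `H` such that each edge of `G`
is contained in its corresponding hyperedge. -/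
def HasBergeCopy {α β : Type*} [DecidableEq β] (G : SimpleGraph α)
    (H : Finset (Finset β)) : Prop :=
  ∃ (i : α → β) (f : Sym2 α → Finset β),
    Function.Injective i ∧ Set.InjOn f G.edgeSet ∧
    (∀ e ∈ G.edgeSet, f e ∈ H) ∧
    (∀ u v, G.Adj u v → i u ∈ f s(u, v) ∧ i v ∈ f s(u, v))

/-- The edge set of the shadow graph of a hypergraph `H`: all 2-element subsets of
vertices covered by some hyperedge of `H`. -/
def covPairs {β : Type*} [DecidableEq β] (H : Finset (Finset β)) : Finset (Finset β) :=
  H.biUnion fun h => Finset.powersetCard 2 h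

/-- The `R`-cover Turán number `êx_R(n, G)`: the maximum number of edges in the shadow
of a Berge-`G`-free `R`-graph on `n` vertices. -/
noncomputable def coverTuranNumber {α : Type*} (R : Set ℕ) (n : ℕ)
    (G : SimpleGraph α) : ℕ :=
  sSup { m | ∃ H : Finset (Finset (Fin n)),
    (∀ h ∈ H, h.card ∈ R) ∧ ¬ HasBergeCopy G H ∧ m = (covPairs H).card }

/-- The `k`-cover Turán density `π̂_k(G) = limsup_{n → ∞} êx_k(n, G) / C(n,2)`. -/
noncomputable def coverTuranDensity {α : Type*} (k : ℕ) (G : SimpleGraph α) : ℝ :=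
  Filter.limsup
    (fun n : ℕ => (coverTuranNumber {k} n G : ℝ) / (n.choose 2 : ℝ)) Filter.atTop

/-- The degeneracy condition of Theorem 4 (characterizing `π̂₃(G) = 0`):
`G` is triangle-free, some vertex deletion makes `G` bipartite, and there is a
bipartite subgraph `B ≤ G` such that the remaining edges of `G` form a (possibly
empty) matching inside one of the two parts of `B`. -/
def DegenerateCond {α : Type*} (G : SimpleGraph α) : Prop :=
  (G.CliqueFree 3 ∧ ∃ v : α, (G.induce ({v}ᶜ : Set α)).Colorable 2) ∧
  (∃ (B : SimpleGraph α) (U : Set α), B ≤ G ∧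
    (∀ u v : α, B.Adj u v → (u ∈ U ↔ v ∉ U)) ∧
    ∃ S : Set α, (S = U ∨ S = Uᶜ) ∧
      (∀ e ∈ G.edgeSet \ B.edgeSet, ∀ x : α, x ∈ e → x ∈ S) ∧
      (∀ e ∈ G.edgeSet \ B.edgeSet, ∀ e' ∈ G.edgeSet \ B.edgeSet,
        e ≠ e' → ∀ x : α, x ∈ e → x ∉ e'))


namespace CovTuran

open Finset Filter

theorem hasBerge_of {α β : Type*} [DecidableEq β] {G : SimpleGraph α} {H : Finset (Finset β)}
    (i : α → β) (hi : Function.Injective i) (F : α → α → Finset β)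
    (hs : ∀ u v, G.Adj u v → F u v = F v u)
    (hH : ∀ u v, G.Adj u v → F u v ∈ H)
    (hm : ∀ u v, G.Adj u v → i u ∈ F u v)
    (hinj : ∀ u v u' v', G.Adj u v → G.Adj u' v' → F u v = F u' v' → s(u, v) = s(u', v')) :
    HasBergeCopy G H := by
  classical
  have key : ∀ e : Sym2 α, ∃ p : α × α, s(p.1, p.2) = e := by
    intro e
    induction e using Sym2.ind with
    | _ x y => exact ⟨(x, y), rfl⟩
  choose p hp using key
  have hadj : ∀ e ∈ G.edgeSet, G.Adj (p e).1 (p e).2 := by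
    intro e he
    rw [← SimpleGraph.mem_edgeSet, hp]; exact he
  refine ⟨i, fun e => F (p e).1 (p e).2, hi, ?_, ?_, ?_⟩
  · intro e he e' he' h
    have := hinj _ _ _ _ (hadj e he) (hadj e' he') h
    rwa [hp, hp] at this
  · intro e he
    exact hH _ _ (hadj e he)
  · intro u v huv
    have h1 := hp s(u, v)
    have hF : F (p s(u, v)).1 (p s(u, v)).2 = F u v := by
      rcases Sym2.eq_iff.mp h1 with ⟨h2, h3⟩ | ⟨h2, h3⟩
      · rw [h2, h3]
      · rw [h2, h3]; exact hs _ _ huv.symm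
    simp only [hF]
    refine ⟨hm _ _ huv, ?_⟩
    rw [hs _ _ huv]
    exact hm _ _ huv.symm

theorem covPairs_card_le {n : ℕ} (H : Finset (Finset (Fin n))) :
    (covPairs H).card ≤ n.choose 2 := by
  have : covPairs H ⊆ powersetCard 2 univ := by
    intro p hp
    simp only [covPairs, mem_biUnion, mem_powersetCard] at hp ⊢
    obtain ⟨h, _, _, h2⟩ := hp
    exact ⟨subset_univ _, h2⟩
  calc _ ≤ _ := card_le_card this
    _ = _ := by simp

theorem covNumber_bdd {α : Type*} (n : ℕ) (G : SimpleGraph α) :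
    BddAbove { m | ∃ H : Finset (Finset (Fin n)),
    (∀ h ∈ H, h.card ∈ ({3} : Set ℕ)) ∧ ¬ HasBergeCopy G H ∧ m = (covPairs H).card } := by
  refine ⟨n.choose 2, ?_⟩
  rintro m ⟨H, _, _, rfl⟩
  exact covPairs_card_le H

theorem covNumber_le {α : Type*} (n : ℕ) (G : SimpleGraph α) (k : ℕ)
    (h : ∀ H : Finset (Finset (Fin n)), (∀ h ∈ H, h.card = 3) → ¬ HasBergeCopy G H →
      (covPairs H).card ≤ k) : coverTuranNumber {3} n G ≤ k := by
  unfold coverTuranNumber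
  apply csSup_le'
  rintro m ⟨H, h1, h2, rfl⟩
  exact h H (fun e he => by simpa using h1 e he) h2

theorem hasBerge_map {α β γ : Type*} [DecidableEq β] [DecidableEq γ] {G : SimpleGraph α}
    {H : Finset (Finset β)} (e : β ≃ γ)
    (h : HasBergeCopy G (H.image (fun s => s.map e.toEmbedding))) : HasBergeCopy G H := by
  obtain ⟨i, f, hi, hf, hH, hm⟩ := h
  refine ⟨fun a => e.symm (i a), fun a => (f a).map e.symm.toEmbedding, ?_, ?_, ?_, ?_⟩
  · exact e.symm.injective.comp hi
  · intro a ha b hb hab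
    exact hf ha hb (Finset.map_injective _ hab)
  · intro a ha
    obtain ⟨s, hs, hs'⟩ := mem_image.mp (hH a ha)
    have : (f a).map e.symm.toEmbedding = s := by
      rw [← hs']
      ext x; simp
    show (f a).map e.symm.toEmbedding ∈ H
    rw [this]; exact hs
  · intro u v huv
    have := hm u v huv
    simpa using this

theorem le_covNumber {α V : Type*} [Fintype V] [DecidableEq V] {n : ℕ} (hV : Fintype.card V = n)
    (G : SimpleGraph α) (H : Finset (Finset V)) (hH : ∀ h ∈ H, h.card = 3)
    (hB : ¬ HasBergeCopy G H) : (covPairs H).card ≤ coverTuranNumber {3} n G := by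
  let e : V ≃ Fin n := Fintype.equivFinOfCardEq hV
  unfold coverTuranNumber
  refine le_csSup (covNumber_bdd n G) ⟨H.image (fun s => s.map e.toEmbedding), ?_, ?_, ?_⟩
  · intro h hh
    obtain ⟨s, hs, rfl⟩ := mem_image.mp hh
    simpa using hH s hs
  · exact fun h => hB (hasBerge_map e h)
  · have : covPairs (H.image (fun s => s.map e.toEmbedding)) =
        (covPairs H).image (fun s => s.map e.toEmbedding) := by
      ext p
      simp only [covPairs, mem_biUnion, mem_image, mem_powersetCard]
      constructor
      · rintro ⟨_, ⟨s, hs, rfl⟩, hp, hc⟩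
        refine ⟨p.map e.symm.toEmbedding, ⟨s, hs, ?_, by simpa using hc⟩, ?_⟩
        · intro x hx
          simp only [mem_map_equiv, Equiv.symm_symm] at hx
          have := hp hx
          simpa using this
        · ext x; simp
      · rintro ⟨q, ⟨s, hs, hq, hc⟩, rfl⟩
        exact ⟨_, ⟨s, hs, rfl⟩, by simpa using hq, by simpa using hc⟩
    rw [this, card_image_of_injective]
    exact fun a b hab => Finset.map_injective _ hab

theorem ratio_le_one {α : Type*} (n : ℕ) (G : SimpleGraph α) :
    (coverTuranNumber {3} n G : ℝ) / (n.choose 2 : ℝ) ≤ 1 := by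
  apply div_le_one_of_le₀ _ (by positivity)
  exact_mod_cast covNumber_le n G _ (fun H _ _ => covPairs_card_le H)

theorem le_density {α : Type*} (G : SimpleGraph α) (x : ℝ)
    (h : ∃ᶠ n : ℕ in atTop, x ≤ (coverTuranNumber {3} n G : ℝ) / (n.choose 2 : ℝ)) :
    x ≤ coverTuranDensity 3 G := by
  unfold coverTuranDensity
  refine le_limsup_of_frequently_le h ?_
  exact isBoundedUnder_of ⟨1, fun n => ratio_le_one n G⟩

theorem density_nonneg {α : Type*} (G : SimpleGraph α) : 0 ≤ coverTuranDensity 3 G :=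
  le_density G 0 (Frequently.of_forall fun n => by positivity)

theorem density_le {α : Type*} (G : SimpleGraph α) (x : ℝ) (hx : 0 ≤ x)
    (h : ∀ ε > 0, ∀ᶠ n : ℕ in atTop, ∀ H : Finset (Finset (Fin n)), (∀ h ∈ H, h.card = 3) →
      (x + ε) * (n.choose 2 : ℝ) < (covPairs H).card → HasBergeCopy G H) :
    coverTuranDensity 3 G ≤ x := by
  apply le_of_forall_pos_le_add
  intro ε hε
  unfold coverTuranDensity
  apply limsup_le_of_le
  · exact isCoboundedUnder_le_of_le atTop (x := 0) (fun n => by positivity)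
  · filter_upwards [h ε hε] with n hn
    apply div_le_of_le_mul₀ (by positivity) (by positivity)
    have := covNumber_le n G ⌊(x + ε) * (n.choose 2 : ℝ)⌋₊ (fun H h1 h2 => by
      apply Nat.le_floor
      by_contra hc
      exact h2 (hn H h1 (not_le.mp hc)))
    calc (coverTuranNumber {3} n G : ℝ) ≤ (⌊(x + ε) * (n.choose 2 : ℝ)⌋₊ : ℝ) := by exact_mod_cast this
      _ ≤ _ := Nat.floor_le (by positivity)

end CovTuran

namespace CovTuran

open Finset Filter

theorem es_edges (r t : ℕ) (hr : 1 ≤ r) (ε : ℝ) (hε : 0 < ε) :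
    ∀ᶠ n : ℕ in atTop, ∀ (Γ : SimpleGraph (Fin n)) [DecidableRel Γ.Adj],
      (1 - 1 / (r : ℝ) + ε) * (n.choose 2 : ℝ) < (Γ.edgeFinset.card : ℝ) →
      (SimpleGraph.completeEquipartiteGraph (r + 1) t).IsContained Γ := by
  set K := SimpleGraph.completeEquipartiteGraph (r + 1) t with hK
  set q : ℝ := 1 - 1 / (r : ℝ) + ε / 2 with hq
  have hr' : 1 / (r : ℝ) ≤ 1 := by
    rw [div_le_one (by exact_mod_cast hr)]; exact_mod_cast hr
  have hq0 : 0 ≤ q := by rw [hq]; linarith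
  obtain ⟨N, hN⟩ := eventually_atTop.mp
    (SimpleGraph.eventually_completeEquipartiteGraph_isContained_of_minDegree (half_pos hε) r t)
  let e : ℕ → ℝ := fun n => (SimpleGraph.extremalNumber n K : ℝ)
  have step : ∀ n, N ≤ n → e (n + 1) ≤ e n + q * (n + 1) := by
    intro n hn
    have h0 : (0 : ℝ) ≤ e n + q * (n + 1) := by positivity
    have := (SimpleGraph.extremalNumber_le_iff_of_nonneg (V := Fin (n + 1)) K h0).mpr
    rw [Fintype.card_fin] at this
    apply this
    intro Γ _ hfree
    obtain ⟨v, hv⟩ := Γ.exists_minimal_degree_vertex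
    have hdeg : (Γ.degree v : ℝ) < q * (n + 1) := by
      by_contra hc
      push Not at hc
      apply hfree
      apply hN (n + 1) (by omega)
      rw [hv]
      push_cast
      exact hc
    have h1 := SimpleGraph.card_edgeFinset_deleteIncidenceSet_le_extremalNumber hfree v
    have h2 := Γ.card_edgeFinset_deleteIncidenceSet v
    have h3 : Γ.edgeFinset.card ≤ SimpleGraph.extremalNumber n K + Γ.degree v := by
      simp only [Fintype.card_fin, Nat.add_sub_cancel] at h1
      omega
    have h4 : (Γ.edgeFinset.card : ℝ) ≤ e n + Γ.degree v := by
      show (Γ.edgeFinset.card : ℝ) ≤ (SimpleGraph.extremalNumber n K : ℝ) + Γ.degree v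
      exact_mod_cast h3
    linarith
  have bound : ∀ n, N ≤ n → e n ≤ e N + q * (n * (n + 1) / 2) := by
    intro n hn
    induction n, hn using Nat.le_induction with
    | base => 
      have : 0 ≤ q * ((N : ℝ) * (N + 1) / 2) := by positivity
      linarith
    | succ n hn ih =>
      have := step n hn
      push_cast
      nlinarith
  have hlim : ∀ᶠ n : ℕ in atTop, e N + q * (n : ℝ) ≤ ε / 2 * (n * (n - 1) / 2) := by
    obtain ⟨M, hM⟩ := exists_nat_gt (4 * (e N + q) / ε + 1)
    filter_upwards [eventually_ge_atTop (max M 1)] with n hn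
    have h1 : (M : ℝ) ≤ n := by exact_mod_cast (le_max_left _ _).trans hn
    have h2 : (1 : ℝ) ≤ n := by exact_mod_cast (le_max_right _ _).trans hn
    have h3 : 4 * (e N + q) / ε ≤ n - 1 := by linarith
    rw [div_le_iff₀ hε] at h3
    have h4 : 0 ≤ e N := Nat.cast_nonneg _
    nlinarith [mul_nonneg h4 (sub_nonneg.mpr h2)]
  filter_upwards [hlim, eventually_ge_atTop N] with n h1 h2 Γ _ hΓ
  apply SimpleGraph.IsContained.of_extremalNumber_lt_card_edgeFinset
  rw [Fintype.card_fin]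
  have h3 := bound n h2
  rw [Nat.cast_choose_two] at hΓ
  have : (SimpleGraph.extremalNumber n K : ℝ) < Γ.edgeFinset.card := by
    refine lt_of_le_of_lt h3 (lt_of_le_of_lt ?_ hΓ)
    have : (1 - 1 / (r : ℝ) + ε) = q + ε / 2 := by rw [hq]; ring
    rw [this]
    nlinarith
  exact_mod_cast this

theorem exists_good {α I : Type*} [Fintype α] [DecidableEq α] [Fintype I] (T : ℕ)
    (z : I → α) (bad : I → (α → Fin T) → Prop)
    (h : ∀ j ψ s t, bad j (Function.update ψ (z j) s) → bad j (Function.update ψ (z j) t) → s = t)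
    (hT : Fintype.card I < T) : ∃ ψ : α → Fin T, ∀ j, ¬ bad j ψ := by
  classical
  by_contra hc
  push Not at hc
  have hcard : ∀ j, T * (univ.filter (fun ψ => bad j ψ)).card ≤ Fintype.card (α → Fin T) := by
    intro j
    have : ((univ : Finset (Fin T)) ×ˢ (univ.filter (fun ψ => bad j ψ))).card ≤
        (univ : Finset (α → Fin T)).card := by
      apply card_le_card_of_injOn (fun p => Function.update p.2 (z j) p.1)
      · intro _ _; simp
      · rintro ⟨s, ψ⟩ h1 ⟨s', ψ'⟩ h2 heq
        simp only [coe_product, coe_univ, coe_filter, mem_univ, true_and, Set.mem_prod,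
          Set.mem_univ, Set.mem_ofPred_eq] at h1 h2 heq
        have hs : s = s' := by
          have := congrFun heq (z j)
          simpa using this
        have hψ : ∀ x, x ≠ z j → ψ x = ψ' x := by
          intro x hx
          have := congrFun heq x
          simpa [hx] using this
        have e1 : ψ = Function.update ψ (z j) (ψ (z j)) := by simp
        have e2 : ψ' = Function.update ψ (z j) (ψ' (z j)) := by
          ext x
          by_cases hx : x = z j
          · subst hx; simp
          · simp [hx, hψ x hx]
        have := h j ψ _ _ (e1 ▸ h1) (e2 ▸ h2)
        rw [this] at e1
        rw [hs, e1, ← e2]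
    simpa using this
  have hun : (univ : Finset (α → Fin T)) ⊆ univ.biUnion (fun j => univ.filter (fun ψ => bad j ψ)) := by
    intro ψ _
    obtain ⟨j, hj⟩ := hc ψ
    simp only [mem_biUnion, mem_univ, mem_filter, true_and]
    exact ⟨j, hj⟩
  have h1 := (card_le_card hun).trans card_biUnion_le
  have h2 : T * (univ : Finset (α → Fin T)).card ≤ Fintype.card I * Fintype.card (α → Fin T) := by
    calc _ ≤ T * ∑ j, (univ.filter (fun ψ => bad j ψ)).card := Nat.mul_le_mul_left _ h1
      _ = ∑ j, T * (univ.filter (fun ψ => bad j ψ)).card := by rw [mul_sum]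
      _ ≤ ∑ j : I, Fintype.card (α → Fin T) := sum_le_sum (fun j _ => hcard j)
      _ = _ := by simp
  have hpos : 0 < Fintype.card (α → Fin T) := by
    have : NeZero T := ⟨by omega⟩
    exact Fintype.card_pos
  rw [card_univ] at h2
  have := Nat.le_of_mul_le_mul_right h2 hpos
  omega

/-- The shadow graph. -/
def shadow {V : Type*} (H : Finset (Finset V)) : SimpleGraph V where
  Adj u v := u ≠ v ∧ ∃ h ∈ H, u ∈ h ∧ v ∈ h
  symm := ⟨fun _ _ ⟨h, k, hk, a, b⟩ => ⟨h.symm, k, hk, b, a⟩⟩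
  loopless := ⟨fun _ h => h.1 rfl⟩

theorem covPairs_card_le_shadow {V : Type*} [Fintype V] [DecidableEq V] (H : Finset (Finset V))
    [DecidableRel (shadow H).Adj] : (covPairs H).card ≤ (shadow H).edgeFinset.card := by
  classical
  have : covPairs H ⊆ (shadow H).edgeFinset.image (fun e => e.toFinset) := by
    intro p hp
    simp only [covPairs, mem_biUnion, mem_powersetCard] at hp
    obtain ⟨h, hh, hs, hc⟩ := hp
    obtain ⟨x, y, hxy, rfl⟩ := card_eq_two.mp hc
    simp only [mem_image, SimpleGraph.mem_edgeFinset]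
    refine ⟨s(x, y), ?_, ?_⟩
    · rw [SimpleGraph.mem_edgeSet]
      exact ⟨hxy, h, hh, hs (by simp), hs (by simp)⟩
    · ext z; simp
  exact (card_le_card this).trans card_image_le

theorem berge_of_blowup {α V : Type*} [Fintype α] [DecidableEq V] (G : SimpleGraph α)
    (H : Finset (Finset V)) (hH : ∀ h ∈ H, h.card = 3) (r T : ℕ) (hc : G.Colorable r)
    (hT : Fintype.card α ^ 3 + Fintype.card α ^ 2 < T)
    (hK : (SimpleGraph.completeEquipartiteGraph r T).IsContained (shadow H)) :
    HasBergeCopy G H := by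
  classical
  obtain ⟨κ⟩ := hc
  obtain ⟨φ⟩ := hK
  have hφi := φ.injective
  have hφa : ∀ a b : Fin r × Fin T, a.1 ≠ b.1 → (shadow H).Adj (φ a) (φ b) := by
    intro a b hab
    exact φ.toHom.map_adj hab
  have key : ∀ e : Sym2 V, ∃ h : Finset V, e ∈ (shadow H).edgeSet → h ∈ H ∧ ∀ x ∈ e, x ∈ h := by
    intro e
    by_cases he : e ∈ (shadow H).edgeSet
    · induction e using Sym2.ind with
      | _ x y =>
        obtain ⟨_, h, hh, hx, hy⟩ := he
        refine ⟨h, fun _ => ⟨hh, ?_⟩⟩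
        intro z hz
        rcases Sym2.mem_iff.mp hz with rfl | rfl <;> assumption
    · exact ⟨∅, fun h => absurd h he⟩
  choose g hg using key
  let i : (α → Fin T) → α → V := fun ψ x => φ (κ x, ψ x)
  let z : (α × α × α) ⊕ (α × α) → α := fun j => match j with
    | .inl p => p.2.2
    | .inr p => p.2
  let bad : (α × α × α) ⊕ (α × α) → (α → Fin T) → Prop := fun j ψ => match j with
    | .inl p => G.Adj p.1 p.2.1 ∧ p.2.2 ≠ p.1 ∧ p.2.2 ≠ p.2.1 ∧
        i ψ p.2.2 ∈ g s(i ψ p.1, i ψ p.2.1) ∧ i ψ p.2.2 ≠ i ψ p.1 ∧ i ψ p.2.2 ≠ i ψ p.2.1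
    | .inr p => p.1 ≠ p.2 ∧ i ψ p.1 = i ψ p.2
  have hadj : ∀ ψ u v, G.Adj u v → (shadow H).Adj (i ψ u) (i ψ v) := by
    intro ψ u v huv
    exact hφa _ _ (κ.valid huv)
  obtain ⟨ψ, hψ⟩ := exists_good T z bad (by
    rintro (⟨u, v, y⟩ | ⟨x, y⟩) ψ s t h1 h2
    · simp only [bad, z] at h1 h2
      obtain ⟨huv, hyu, hyv, a1, a2, a3⟩ := h1
      obtain ⟨-, -, -, b1, b2, b3⟩ := h2
      have hi : ∀ s x, x ≠ y → i (Function.update ψ y s) x = i ψ x := by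
        intro s x hx; simp [i, hx]
      rw [hi _ _ hyu.symm, hi _ _ hyv.symm] at a1 b1
      rw [hi _ _ hyu.symm] at a2 b2
      rw [hi _ _ hyv.symm] at a3 b3
      have hs := hadj ψ u v huv
      obtain ⟨hgH, hgm⟩ := hg s(i ψ u, i ψ v) hs
      have hcard := hH _ hgH
      have h1 : (((g s(i ψ u, i ψ v)).erase (i ψ u)).erase (i ψ v)).card ≤ 1 := by
        rw [card_erase_of_mem, card_erase_of_mem (hgm _ (by simp)), hcard]
        exact mem_erase.mpr ⟨hs.1.symm, hgm _ (by simp)⟩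
      have := card_le_one.mp h1 _ (mem_erase.mpr ⟨a3, mem_erase.mpr ⟨a2, a1⟩⟩) _
        (mem_erase.mpr ⟨b3, mem_erase.mpr ⟨b2, b1⟩⟩)
      have := hφi this
      simpa using this
    · simp only [bad, z] at h1 h2
      obtain ⟨hxy, a⟩ := h1
      obtain ⟨-, b⟩ := h2
      have a' := hφi a
      have b' := hφi b
      simp [hxy] at a' b'
      rw [← a'.2, ← b'.2]) (by
    simp only [Fintype.card_sum, Fintype.card_prod]
    calc _ = Fintype.card α ^ 3 + Fintype.card α ^ 2 := by ring
      _ < T := hT)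
  have hinj : Function.Injective (i ψ) := by
    intro x y hxy
    by_contra hne
    exact hψ (.inr (x, y)) ⟨hne, hxy⟩
  have hfree : ∀ u v y, G.Adj u v → i ψ y ∈ g s(i ψ u, i ψ v) → y = u ∨ y = v := by
    intro u v y huv hy
    by_contra hne
    push Not at hne
    exact hψ (.inl (u, v, y)) ⟨huv, hne.1, hne.2, hy, hinj.ne hne.1, hinj.ne hne.2⟩
  refine hasBerge_of (i ψ) hinj (fun u v => g s(i ψ u, i ψ v)) ?_ ?_ ?_ ?_
  · intro u v _
    exact congrArg g Sym2.eq_swap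
  · intro u v huv
    exact (hg s(i ψ u, i ψ v) (hadj ψ u v huv)).1
  · intro u v huv
    exact (hg s(i ψ u, i ψ v) (hadj ψ u v huv)).2 _ (by simp)
  · intro u v u' v' huv huv' heq
    have hm := (hg s(i ψ u', i ψ v') (hadj ψ u' v' huv')).2
    rw [← heq] at hm
    have h1 := hfree u v u' huv (hm _ (by simp))
    have h2 := hfree u v v' huv (hm _ (by simp))
    have := huv'.ne
    rw [Sym2.eq_iff]
    rcases h1 with rfl | rfl <;> rcases h2 with rfl | rfl <;> simp_all

theorem density_le_colorable {α : Type*} [Fintype α] (G : SimpleGraph α) (r : ℕ) (hr : 1 ≤ r)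
    (hc : G.Colorable (r + 1)) : coverTuranDensity 3 G ≤ 1 - 1 / (r : ℝ) := by
  classical
  have hr' : 1 / (r : ℝ) ≤ 1 := by
    rw [div_le_one (by exact_mod_cast hr)]; exact_mod_cast hr
  apply density_le G _ (by linarith)
  intro ε hε
  filter_upwards [es_edges r (Fintype.card α ^ 3 + Fintype.card α ^ 2 + 1) hr ε hε] with n hn H hH hlt
  refine berge_of_blowup G H hH (r + 1) _ hc (Nat.lt_succ_self _) (hn (shadow H) ?_)
  refine lt_of_lt_of_le hlt ?_
  exact_mod_cast covPairs_card_le_shadow H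

end CovTuran

namespace CovTuran

open Finset Filter

theorem edges_le_covPairs {V : Type*} [Fintype V] [DecidableEq V] (H : Finset (Finset V))
    (K : SimpleGraph V) [DecidableRel K.Adj] (h : ∀ u v, K.Adj u v → ∃ e ∈ H, u ∈ e ∧ v ∈ e) :
    K.edgeFinset.card ≤ (covPairs H).card := by
  apply card_le_card_of_injOn (fun e => e.toFinset)
  · intro e he
    induction e using Sym2.ind with
    | _ x y =>
      have hxy : K.Adj x y := by simpa using he
      obtain ⟨s, hs, hx, hy⟩ := h x y hxy
      simp only [covPairs, coe_biUnion, Set.mem_iUnion, mem_coe, mem_powersetCard]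
      refine ⟨s, hs, ?_, ?_⟩
      · intro z hz
        have : z = x ∨ z = y := by simpa using hz
        rcases this with rfl | rfl <;> assumption
      · exact Sym2.card_toFinset_of_not_isDiag _ (by simpa using hxy.ne)
  · intro e _ e' _ heq
    simp only at heq
    ext x
    rw [← Sym2.mem_toFinset, heq, Sym2.mem_toFinset]

theorem cross_le_covPairs {V A B : Type*} [Fintype A] [Fintype B] [DecidableEq V]
    (H : Finset (Finset V)) (p : A → V) (q : B → V) (hp : Function.Injective p)
    (hq : Function.Injective q) (hpq : ∀ a b, p a ≠ q b)
    (h : ∀ a b, ∃ e ∈ H, p a ∈ e ∧ q b ∈ e) :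
    Fintype.card A * Fintype.card B ≤ (covPairs H).card := by
  classical
  rw [← Fintype.card_prod, ← card_univ]
  apply card_le_card_of_injOn (fun x : A × B => {p x.1, q x.2})
  · rintro ⟨a, b⟩ _
    obtain ⟨s, hs, hx, hy⟩ := h a b
    simp only [covPairs, coe_biUnion, Set.mem_iUnion, mem_coe, mem_powersetCard]
    refine ⟨s, hs, ?_, card_pair (hpq a b)⟩
    intro z hz
    have : z = p a ∨ z = q b := by simpa using hz
    rcases this with rfl | rfl <;> assumption
  · rintro ⟨a, b⟩ _ ⟨a', b'⟩ _ heq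
    simp only at heq
    have h1 : p a ∈ ({p a', q b'} : Finset V) := by rw [← heq]; simp
    have h2 : q b ∈ ({p a', q b'} : Finset V) := by rw [← heq]; simp
    simp only [mem_insert, mem_singleton, hpq a b', or_false] at h1
    simp only [mem_insert, mem_singleton, (hpq a' b).symm, false_or] at h2
    rw [hp h1, hq h2]

theorem lower_turan {α : Type*} (G : SimpleGraph α) (r : ℕ) (hr : 3 ≤ r)
    (hc : ¬ G.Colorable r) : 1 - 1 / (r : ℝ) ≤ coverTuranDensity 3 G := by
  classical
  apply le_density
  rw [frequently_atTop]
  intro N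
  set m := N + 1 with hm
  refine ⟨r * m, by nlinarith, ?_⟩
  let H : Finset (Finset (Fin r × Fin m)) :=
    (powersetCard 3 univ).filter (fun s => Set.InjOn Prod.fst (s : Set (Fin r × Fin m)))
  have h1 : (covPairs H).card ≤ coverTuranNumber {3} (r * m) G := by
    apply le_covNumber (by simp)
    · intro h hh
      exact (mem_powersetCard.mp (mem_filter.mp hh).1).2
    · rintro ⟨i, f, hi, hf, hfH, hfm⟩
      apply hc
      refine ⟨SimpleGraph.Coloring.mk (fun x => (i x).1) ?_⟩
      intro u v huv heq
      have h1 := (mem_filter.mp (hfH s(u, v) huv)).2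
      exact huv.ne (hi (h1 (hfm u v huv).1 (hfm u v huv).2 heq))
  have h2 := edges_le_covPairs H (SimpleGraph.completeEquipartiteGraph r m) (by
    rintro ⟨a, p⟩ ⟨b, q⟩ hab
    rw [SimpleGraph.completeEquipartiteGraph_adj] at hab
    simp only at hab
    obtain ⟨c, hca, hcb⟩ : ∃ c : Fin r, c ≠ a ∧ c ≠ b := by
      have : ({a, b} : Finset (Fin r)).card < (univ : Finset (Fin r)).card := by
        rw [card_univ, Fintype.card_fin]
        exact lt_of_le_of_lt card_le_two (by omega)
      obtain ⟨c, _, hc⟩ := exists_mem_notMem_of_card_lt_card this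
      simp at hc
      exact ⟨c, hc.1, hc.2⟩
    refine ⟨{(a, p), (b, q), (c, p)}, ?_, by simp, by simp⟩
    simp only [H, mem_filter, mem_powersetCard, subset_univ, true_and]
    constructor
    · rw [card_eq_three]
      exact ⟨_, _, _, by simp [hab], by simp [hca.symm], by simp [hcb.symm], rfl⟩
    · intro x hx y hy hxy
      simp at hx hy
      rcases hx with rfl | rfl | rfl <;> rcases hy with rfl | rfl | rfl <;> simp_all)
  rw [SimpleGraph.card_edgeFinset_completeEquipartiteGraph] at h2
  have h3 : ((r.choose 2 * m ^ 2 : ℕ) : ℝ) ≤ coverTuranNumber {3} (r * m) G := by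
    exact_mod_cast h2.trans h1
  have hr3 : (3 : ℝ) ≤ r := by exact_mod_cast hr
  have hm1 : (1 : ℝ) ≤ m := by rw [hm]; push_cast; linarith [(Nat.cast_nonneg N : (0:ℝ) ≤ N)]
  have hrm : (3 : ℝ) ≤ r * m := by nlinarith
  rw [Nat.cast_mul, Nat.cast_choose_two, Nat.cast_pow] at h3
  rw [Nat.cast_choose_two, Nat.cast_mul, le_div_iff₀ (by nlinarith)]
  refine le_trans ?_ h3
  have : (1 - 1 / (r : ℝ)) = (r - 1) / r := by field_simp
  rw [this, div_mul_eq_mul_div, div_le_iff₀ (by linarith)]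
  have : (0:ℝ) ≤ (r - 1) * (r * m) := by nlinarith
  nlinarith

/-- Hyperedges of the matching construction. -/
def matchEdge {m : ℕ} (k : Fin m) (b : Fin (2 * m)) : Finset ((Fin m × Bool) ⊕ Fin (2 * m)) :=
  {Sum.inl (k, true), Sum.inl (k, false), Sum.inr b}

theorem mem_matchEdge_inl {m : ℕ} (k k' : Fin m) (b : Fin (2 * m)) (s : Bool) :
    Sum.inl (k', s) ∈ matchEdge k b ↔ k' = k := by
  cases s <;> simp [matchEdge]

theorem mem_matchEdge_inr {m : ℕ} (k : Fin m) (b b' : Fin (2 * m)) :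
    Sum.inr b' ∈ matchEdge k b ↔ b' = b := by
  simp [matchEdge]

theorem match_berge {α : Type*} (G : SimpleGraph α) (m : ℕ)
    (H : Finset (Finset ((Fin m × Bool) ⊕ Fin (2 * m))))
    (hH : ∀ h ∈ H, ∃ k b, h = matchEdge k b) (hB : HasBergeCopy G H) :
    G.CliqueFree 3 ∧ (∃ (B : SimpleGraph α) (U : Set α), B ≤ G ∧
    (∀ u v : α, B.Adj u v → (u ∈ U ↔ v ∉ U)) ∧
    ∃ S : Set α, (S = U ∨ S = Uᶜ) ∧
      (∀ e ∈ G.edgeSet \ B.edgeSet, ∀ x : α, x ∈ e → x ∈ S) ∧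
      (∀ e ∈ G.edgeSet \ B.edgeSet, ∀ e' ∈ G.edgeSet \ B.edgeSet,
        e ≠ e' → ∀ x : α, x ∈ e → x ∉ e')) := by
  classical
  obtain ⟨i, f, hi, hf, hfH, hfm⟩ := hB
  have hrr : ∀ u v b b', G.Adj u v → i u = Sum.inr b → i v = Sum.inr b' → False := by
    intro u v b b' huv hu hv
    obtain ⟨k, c, hkc⟩ := hH _ (hfH s(u, v) huv)
    have := hfm u v huv
    rw [hkc, hu, hv, mem_matchEdge_inr, mem_matchEdge_inr] at this
    apply huv.ne
    apply hi
    rw [hu, hv, this.1, this.2]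
  have hll : ∀ u v k s k' s', G.Adj u v → i u = Sum.inl (k, s) → i v = Sum.inl (k', s') →
      k' = k ∧ s' = !s := by
    intro u v k s k' s' huv hu hv
    obtain ⟨l, c, hkc⟩ := hH _ (hfH s(u, v) huv)
    have := hfm u v huv
    rw [hkc, hu, hv, mem_matchEdge_inl, mem_matchEdge_inl] at this
    obtain ⟨rfl, rfl⟩ := this
    refine ⟨rfl, ?_⟩
    by_contra hs
    have : s = s' := by cases s <;> cases s' <;> simp_all
    subst this
    exact huv.ne (hi (hu.trans hv.symm))
  have hlr : ∀ u v k s b, G.Adj u v → i u = Sum.inl (k, s) → i v = Sum.inr b →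
      f s(u, v) = matchEdge k b := by
    intro u v k s b huv hu hv
    obtain ⟨l, c, hkc⟩ := hH _ (hfH s(u, v) huv)
    have := hfm u v huv
    rw [hkc, hu, hv, mem_matchEdge_inl, mem_matchEdge_inr] at this
    rw [hkc, this.1, this.2]
  have htri : ∀ u v w k s k' s' b, G.Adj u v → G.Adj u w → G.Adj v w → i u = Sum.inl (k, s) →
      i v = Sum.inl (k', s') → i w = Sum.inr b → False := by
    intro u v w k s k' s' b huv huw hvw hu hv hw
    have h1 := hlr u w _ _ _ huw hu hw
    have h2 := hlr v w _ _ _ hvw hv hw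
    rw [(hll u v _ _ _ _ huv hu hv).1, ← h1] at h2
    have := hf hvw huw h2
    rw [Sym2.eq_iff] at this
    rcases this with ⟨h, _⟩ | ⟨h, _⟩
    · exact huv.ne h.symm
    · exact hvw.ne h
  constructor
  · intro s hs
    rw [SimpleGraph.is3Clique_iff] at hs
    obtain ⟨a, b, c, hab, hac, hbc, -⟩ := hs
    rcases ha : i a with ⟨k, s⟩ | x <;> rcases hb : i b with ⟨k', s'⟩ | y <;>
      rcases hc : i c with ⟨k'', s''⟩ | z
    · have h1 := (hll _ _ _ _ _ _ hab ha hb).2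
      have h2 := (hll _ _ _ _ _ _ hac ha hc).2
      have h3 := (hll _ _ _ _ _ _ hbc hb hc).2
      subst h1 
      rw [h2] at h3
      cases s <;> simp at h3
    · exact htri _ _ _ _ _ _ _ _ hab hac hbc ha hb hc
    · exact htri _ _ _ _ _ _ _ _ hac hab hbc.symm ha hc hb
    · exact hrr _ _ _ _ hbc hb hc
    · exact htri _ _ _ _ _ _ _ _ hbc hab.symm hac.symm hb hc ha
    · exact hrr _ _ _ _ hac ha hc
    · exact hrr _ _ _ _ hab ha hb
    · exact hrr _ _ _ _ hab ha hb
  · let U : Set α := {x | (i x).isLeft = true}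
    let B : SimpleGraph α :=
      { Adj := fun u v => G.Adj u v ∧ (u ∈ U ↔ v ∉ U)
        symm := ⟨fun u v h => ⟨h.1.symm, by have := h.2; tauto⟩⟩
        loopless := ⟨fun u h => G.loopless.irrefl u h.1⟩ }
    have hnon : ∀ u v, s(u, v) ∈ G.edgeSet \ B.edgeSet →
        G.Adj u v ∧ ∃ k s, i u = Sum.inl (k, s) ∧ i v = Sum.inl (k, !s) := by
      intro u v ⟨h1, h2⟩
      have h1' : G.Adj u v := h1
      have h2' : ¬ (G.Adj u v ∧ (u ∈ U ↔ v ∉ U)) := h2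
      refine ⟨h1', ?_⟩
      rcases ha : i u with ⟨k, s⟩ | x <;> rcases hb : i v with ⟨k', s'⟩ | y
      · have := hll _ _ _ _ _ _ h1' ha hb
        refine ⟨k, s, rfl, ?_⟩
        rw [this.1, this.2]
      · exact absurd ⟨h1', by simp [U, ha, hb]⟩ h2'
      · exact absurd ⟨h1', by simp [U, ha, hb]⟩ h2'
      · exact (hrr _ _ _ _ h1' ha hb).elim
    refine ⟨B, U, fun u v h => h.1, fun u v h => h.2, U, Or.inl rfl, ?_, ?_⟩
    · intro e he x hx
      induction e using Sym2.ind with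
      | _ u v =>
        obtain ⟨_, k, s, h1, h2⟩ := hnon u v he
        rcases Sym2.mem_iff.mp hx with rfl | rfl
        · simp [U, h1]
        · simp [U, h2]
    · intro e he e' he' hne x hx hx'
      obtain ⟨y, rfl⟩ := hx
      obtain ⟨y', rfl⟩ := hx'
      obtain ⟨_, k, s, h1, h2⟩ := hnon x y he
      obtain ⟨_, k', s', h1', h2'⟩ := hnon x y' he'
      rw [h1] at h1'
      simp only [Sum.inl.injEq, Prod.mk.injEq] at h1'
      rw [← h1'.1, ← h1'.2, ← h2] at h2'
      exact hne (by rw [hi h2'])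

theorem lower_match {α : Type*} (G : SimpleGraph α)
    (hc : ¬ (G.CliqueFree 3 ∧ (∃ (B : SimpleGraph α) (U : Set α), B ≤ G ∧
    (∀ u v : α, B.Adj u v → (u ∈ U ↔ v ∉ U)) ∧
    ∃ S : Set α, (S = U ∨ S = Uᶜ) ∧
      (∀ e ∈ G.edgeSet \ B.edgeSet, ∀ x : α, x ∈ e → x ∈ S) ∧
      (∀ e ∈ G.edgeSet \ B.edgeSet, ∀ e' ∈ G.edgeSet \ B.edgeSet,
        e ≠ e' → ∀ x : α, x ∈ e → x ∉ e')))) : 1 / 2 ≤ coverTuranDensity 3 G := by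
  classical
  apply le_density
  rw [frequently_atTop]
  intro N
  set m := N + 1 with hm
  refine ⟨4 * m, by omega, ?_⟩
  let H : Finset (Finset ((Fin m × Bool) ⊕ Fin (2 * m))) :=
    univ.image (fun p : Fin m × Fin (2 * m) => matchEdge p.1 p.2)
  have hH : ∀ h ∈ H, ∃ k b, h = matchEdge k b := by
    intro h hh
    obtain ⟨p, _, rfl⟩ := mem_image.mp hh
    exact ⟨_, _, rfl⟩
  have h1 : (covPairs H).card ≤ coverTuranNumber {3} (4 * m) G := by
    apply le_covNumber (by simp; ring)
    · intro h hh
      obtain ⟨k, b, rfl⟩ := hH h hh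
      rw [card_eq_three]
      exact ⟨_, _, _, by simp, by simp, by simp, rfl⟩
    · intro hB
      exact hc (match_berge G m H hH hB)
  have h2 := cross_le_covPairs H (fun x : Fin m × Bool => (Sum.inl x : (Fin m × Bool) ⊕ Fin (2 * m)))
    (fun b : Fin (2 * m) => Sum.inr b) Sum.inl_injective Sum.inr_injective (by simp) (by
    rintro ⟨k, s⟩ b
    refine ⟨matchEdge k b, mem_image.mpr ⟨(k, b), mem_univ _, rfl⟩, ?_, ?_⟩
    · rw [mem_matchEdge_inl]
    · rw [mem_matchEdge_inr])
  simp only [Fintype.card_prod, Fintype.card_fin, Fintype.card_bool] at h2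
  have h3 : ((m * 2 * (2 * m) : ℕ) : ℝ) ≤ coverTuranNumber {3} (4 * m) G := by
    exact_mod_cast h2.trans h1
  have hm1 : (1 : ℝ) ≤ m := by rw [hm]; push_cast; linarith [(Nat.cast_nonneg N : (0:ℝ) ≤ N)]
  push_cast at h3
  rw [Nat.cast_choose_two, Nat.cast_mul, le_div_iff₀ (by push_cast; nlinarith)]
  refine le_trans ?_ h3
  push_cast
  nlinarith

/-- Hyperedges of the apex construction. -/
def apexEdge {m : ℕ} (a b : Fin m) : Finset (Option (Fin m ⊕ Fin m)) :=
  {none, some (Sum.inl a), some (Sum.inr b)}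

theorem lower_apex {α : Type*} [Nonempty α] (G : SimpleGraph α)
    (hc : ¬ (∃ v : α, (G.induce ({v}ᶜ : Set α)).Colorable 2)) :
    1 / 2 ≤ coverTuranDensity 3 G := by
  classical
  apply le_of_forall_pos_le_add
  intro ε hε
  rw [← sub_le_iff_le_add]
  apply le_density
  rw [frequently_atTop]
  intro N
  obtain ⟨M, hM⟩ := exists_nat_gt (1 / ε)
  set m := N + 1 + M with hm
  refine ⟨2 * m + 1, by omega, ?_⟩
  let H : Finset (Finset (Option (Fin m ⊕ Fin m))) :=
    univ.image (fun p : Fin m × Fin m => apexEdge p.1 p.2)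
  have hH : ∀ h ∈ H, ∃ k b, h = apexEdge k b := by
    intro h hh
    obtain ⟨p, _, rfl⟩ := mem_image.mp hh
    exact ⟨_, _, rfl⟩
  have h1 : (covPairs H).card ≤ coverTuranNumber {3} (2 * m + 1) G := by
    apply le_covNumber (by simp; ring)
    · intro h hh
      obtain ⟨k, b, rfl⟩ := hH h hh
      rw [card_eq_three]
      exact ⟨_, _, _, by simp, by simp, by simp, rfl⟩
    · rintro ⟨i, f, hi, hf, hfH, hfm⟩
      apply hc
      obtain ⟨v, hv⟩ : ∃ v, ∀ x, x ≠ v → i x ≠ none := by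
        by_cases h : ∃ v, i v = none
        · obtain ⟨v, hv⟩ := h
          exact ⟨v, fun x hx h' => hx (hi (h'.trans hv.symm))⟩
        · push Not at h
          exact ⟨Classical.arbitrary α, fun x _ => h x⟩
      refine ⟨v, ?_⟩
      have hcol : (G.induce ({v}ᶜ : Set α)).Coloring Bool :=
        SimpleGraph.Coloring.mk (fun x => decide (∃ a, i x = some (Sum.inl a))) (by
          rintro ⟨x, hx⟩ ⟨y, hy⟩ hxy heq
          have hxy' : G.Adj x y := hxy
          have hx' := hv x (by simpa using hx)
          have hy' := hv y (by simpa using hy)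
          obtain ⟨a, b, hab⟩ := hH _ (hfH s(x, y) hxy')
          have hmm := hfm x y hxy'
          rw [hab] at hmm
          simp only [apexEdge, mem_insert, mem_singleton, hx', hy', false_or] at hmm
          have hne : i x ≠ i y := hi.ne hxy'.ne
          rcases hmm with ⟨h1 | h1, h2 | h2⟩ <;> simp_all)
      have := hcol.colorable
      simpa using this
  have h2 := cross_le_covPairs H (fun x : Fin m => (some (Sum.inl x) : Option (Fin m ⊕ Fin m)))
    (fun b : Fin m => some (Sum.inr b)) (by intro a b; simp) (by intro a b; simp) (by simp) (by
    intro a b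
    refine ⟨apexEdge a b, mem_image.mpr ⟨(a, b), mem_univ _, rfl⟩, ?_, ?_⟩ <;> simp [apexEdge])
  simp only [Fintype.card_fin] at h2
  have h3 : ((m * m : ℕ) : ℝ) ≤ coverTuranNumber {3} (2 * m + 1) G := by
    exact_mod_cast h2.trans h1
  have hm1 : (1 : ℝ) ≤ m := by
    rw [hm]; push_cast
    linarith [(Nat.cast_nonneg N : (0:ℝ) ≤ N), (Nat.cast_nonneg M : (0:ℝ) ≤ M)]
  have hm2 : 1 / ε ≤ m := by
    rw [hm]; push_cast
    linarith [(Nat.cast_nonneg N : (0:ℝ) ≤ N)]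
  rw [div_le_iff₀ hε] at hm2
  push_cast at h3
  rw [Nat.cast_choose_two, le_div_iff₀ (by push_cast; nlinarith)]
  refine le_trans ?_ h3
  push_cast
  nlinarith

end CovTuran

namespace CovTuran

open Finset Filter

/-- The triple attached to a pair. -/
def tri {V : Type*} [DecidableEq V] (c : V × V → V) (p : V × V) : Finset V := {p.1, p.2, c p}

/-- `Γ` is a rainbow family of pairs with completing vertices in `H`. -/
structure Rb {V : Type*} [DecidableEq V] (H : Finset (Finset V)) (f : V → Fin 3) (a b d : Fin 3)
    (c : V × V → V) (Γ : Finset (V × V)) : Prop where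
  ab : a ≠ b
  ad : a ≠ d
  bd : b ≠ d
  fa : ∀ p ∈ Γ, f p.1 = a
  fb : ∀ p ∈ Γ, f p.2 = b
  fd : ∀ p ∈ Γ, f (c p) = d
  mem : ∀ p ∈ Γ, tri c p ∈ H

theorem Rb.mono {V : Type*} [DecidableEq V] {H : Finset (Finset V)} {f : V → Fin 3} {a b d : Fin 3}
    {c : V × V → V} {Γ Γ' : Finset (V × V)} (h : Rb H f a b d c Γ) (hs : Γ' ⊆ Γ) :
    Rb H f a b d c Γ' :=
  ⟨h.ab, h.ad, h.bd, fun p hp => h.fa p (hs hp), fun p hp => h.fb p (hs hp),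
    fun p hp => h.fd p (hs hp), fun p hp => h.mem p (hs hp)⟩

theorem Rb.inj {V : Type*} [DecidableEq V] {H : Finset (Finset V)} {f : V → Fin 3} {a b d : Fin 3}
    {c : V × V → V} {Γ : Finset (V × V)} (h : Rb H f a b d c Γ) {p q : V × V} (hp : p ∈ Γ)
    (hq : q ∈ Γ) (e : tri c p = tri c q) : p = q := by
  have h1 : p.1 ∈ tri c q := by rw [← e]; simp [tri]
  have h2 : p.2 ∈ tri c q := by rw [← e]; simp [tri]
  have h3 := h.fa p hp
  have h4 := h.fb p hp
  have h5 := h.fa q hq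
  have h6 := h.fb q hq
  have h7 := h.fd q hq
  have h8 := h.ab
  have h9 := h.ad
  have h10 := h.bd
  simp only [tri, mem_insert, mem_singleton] at h1 h2
  ext1
  · rcases h1 with h1 | h1 | h1
    · exact h1
    · rw [h1] at h3; exact absurd (h3.symm.trans h6) h8
    · rw [h1] at h3; exact absurd (h3.symm.trans h7) h9
  · rcases h2 with h1 | h1 | h1
    · rw [h1] at h4; exact absurd (h5.symm.trans h4) h8
    · exact h1
    · rw [h1] at h4; exact absurd (h4.symm.trans h7) h10

theorem embed_apex {α V : Type*} [DecidableEq V] (G : SimpleGraph α) {H : Finset (Finset V)}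
    {f : V → Fin 3} {a b d : Fin 3} {c : V × V → V} {Γ : Finset (V × V)} (h : Rb H f a b d c Γ)
    (hT : G.CliqueFree 3) (v : α) (κ : α → Prop)
    (hκ : ∀ x y, G.Adj x y → x ≠ v → y ≠ v → (κ x ↔ ¬ κ y))
    (w : V) (m : α → V × V) (hm : ∀ x, m x ∈ Γ) (hw : ∀ x, c (m x) = w)
    (m1 : ∀ x y, (m x).1 = (m y).1 → x = y) (m2 : ∀ x y, (m x).2 = (m y).2 → x = y)
    (xs ys : α → V) (xi : ∀ x y, xs x = xs y → x = y) (yi : ∀ x y, ys x = ys y → x = y)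
    (g1 : ∀ x y, (xs x, ys y) ∈ Γ) (g2 : ∀ x y, ((m x).1, ys y) ∈ Γ)
    (g3 : ∀ x y, (xs x, (m y).2) ∈ Γ) (n1 : ∀ x y, xs x ≠ (m y).1) (n2 : ∀ x y, ys x ≠ (m y).2) :
    HasBergeCopy G H := by
  classical
  have hT' : ∀ x y z, G.Adj x y → G.Adj x z → G.Adj y z → False := by
    intro x y z h1 h2 h3
    exact hT {x, y, z} (SimpleGraph.is3Clique_triple_iff.mpr ⟨h1, h2, h3⟩)
  set A : α → V := fun x => if G.Adj v x then (m x).1 else xs x with hA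
  set B : α → V := fun x => if G.Adj v x then (m x).2 else ys x with hB
  have Ai : ∀ x y, A x = A y → x = y := by
    intro x y
    simp only [hA]
    split_ifs
    · exact m1 x y
    · exact fun h => absurd h.symm (n1 _ _)
    · exact fun h => absurd h (n1 _ _)
    · exact xi x y
  have Bi : ∀ x y, B x = B y → x = y := by
    intro x y
    simp only [hB]
    split_ifs
    · exact m2 x y
    · exact fun h => absurd h.symm (n2 _ _)
    · exact fun h => absurd h (n2 _ _)
    · exact yi x y
  have Am : ∀ x y, A x = (m y).1 → x = y := by
    intro x y
    simp only [hA]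
    split_ifs
    · exact m1 x y
    · exact fun h => absurd h (n1 _ _)
  have Bm : ∀ x y, B x = (m y).2 → x = y := by
    intro x y
    simp only [hB]
    split_ifs
    · exact m2 x y
    · exact fun h => absurd h (n2 _ _)
  have AB : ∀ x y, G.Adj x y → (A x, B y) ∈ Γ := by
    intro x y hxy
    simp only [hA, hB]
    split_ifs with h1 h2
    · exact absurd hxy (fun h3 => hT' v x y h1 h2 h3)
    · exact g2 _ _
    · exact g3 _ _
    · exact g1 _ _
  have Af : ∀ x, f (A x) = a := by
    intro x
    simp only [hA]
    split_ifs
    · exact h.fa _ (hm x)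
    · exact h.fa _ (g1 x x)
  have Bf : ∀ x, f (B x) = b := by
    intro x
    simp only [hB]
    split_ifs
    · exact h.fb _ (hm x)
    · exact h.fb _ (g1 x x)
  have wf : f w = d := by rw [← hw v]; exact h.fd _ (hm v)
  have hAB : ∀ x y, A x ≠ B y := fun x y e => h.ab (by rw [← Af x, e, Bf])
  have hAw : ∀ x, A x ≠ w := fun x e => h.ad (by rw [← Af x, e, wf])
  have hBw : ∀ x, B x ≠ w := fun x e => h.bd (by rw [← Bf x, e, wf])
  set i : α → V := fun x => if x = v then w else if κ x then A x else B x with hi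
  set Q : α → α → V × V := fun x y => if x = v then m y else if y = v then m x else
    if κ x then (A x, B y) else (A y, B x) with hQ
  have Qm : ∀ x y, G.Adj x y → Q x y ∈ Γ := by
    intro x y hxy
    simp only [hQ]
    split_ifs
    · exact hm _
    · exact hm _
    · exact AB _ _ hxy
    · exact AB _ _ hxy.symm
  have Qs : ∀ x y, G.Adj x y → Q x y = Q y x := by
    intro x y hxy
    simp only [hQ]
    have hne := hxy.ne
    by_cases hx : x = v
    · have hy : y ≠ v := fun e => hne (hx.trans e.symm)
      simp [hx, hy]
    · by_cases hy : y = v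
      · simp [hx, hy]
      · have := hκ x y hxy hx hy
        simp only [hx, hy, if_false]
        by_cases hk : κ y
        · simp [this, hk]
        · simp [this, hk]
  have mAB : ∀ x y z, x ≠ y → m z ≠ (A x, B y) := by
    intro x y z hxy e
    have e1 := Am x z (by rw [e])
    have e2 := Bm y z (by rw [e])
    exact hxy (e1.trans e2.symm)
  have mi : ∀ x y, m x = m y → x = y := fun x y e => m1 x y (by rw [e])
  refine hasBerge_of i ?_ (fun x y => tri c (Q x y)) ?_ ?_ ?_ ?_
  · intro x y
    simp only [hi]
    split_ifs with h1 h2 h3 h4 h5 h6 h7 h8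
    · intro _; rw [h1, h2]
    · intro e; exact absurd e.symm (hAw _)
    · intro e; exact absurd e.symm (hBw _)
    · intro e; exact absurd e (hAw _)
    · exact Ai x y
    · intro e; exact absurd e (hAB _ _)
    · intro e; exact absurd e (hBw _)
    · intro e; exact absurd e.symm (hAB _ _)
    · exact Bi x y
  · intro x y hxy
    simp only [Qs x y hxy]
  · intro x y hxy
    exact h.mem _ (Qm x y hxy)
  · intro x y hxy
    by_cases hx : x = v
    · have : i x = c (m y) := by simp [hi, hx, hw]
      have e : Q x y = m y := by simp [hQ, hx]
      simp only [this, tri, e]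
      simp
    · by_cases hy : y = v
      · subst hy
        have e : Q x y = m x := by simp [hQ, hx]
        have : i x = if κ x then (m x).1 else (m x).2 := by
          simp [hi, hx, hA, hB, hxy.symm]
        simp only [e, this, tri, mem_insert, mem_singleton]
        split_ifs <;> simp
      · by_cases hk : κ x
        · simp [tri, hi, hQ, hx, hy, hk]
        · simp [tri, hi, hQ, hx, hy, hk]
  · intro x y x' y' h1 h2 e
    have e := h.inj (Qm _ _ h1) (Qm _ _ h2) e
    have q1 := h1.ne
    have q2 := h2.ne
    have q3 := h1.ne'
    have q4 := h2.ne'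
    simp only [hQ] at e
    rw [Sym2.eq_iff]
    split_ifs at e with a1 a2 a3 a4 a5 a6 a7 a8
    all_goals first
      | (exact absurd e (mAB _ _ _ (by assumption)))
      | (exact absurd e.symm (mAB _ _ _ (by assumption)))
      | (have := mi _ _ e; grind)
      | (have u1 := Ai _ _ (congrArg Prod.fst e); have u2 := Bi _ _ (congrArg Prod.snd e); grind)

theorem embed_star {α V : Type*} [DecidableEq V] (G : SimpleGraph α) {H : Finset (Finset V)}
    {f : V → Fin 3} {a b d : Fin 3} {c : V × V → V} {Γ : Finset (V × V)} (h : Rb H f a b d c Γ)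
    (hT : G.CliqueFree 3) (S : Set α) (M : α → α → Prop)
    (Ms : ∀ x y, M x y → M y x) (MS : ∀ x y, M x y → x ∈ S)
    (Mu : ∀ x y z, M x y → M x z → y = z) (MG : ∀ x y, M x y → G.Adj x y)
    (hS : ∀ x y, G.Adj x y → ¬ M x y → (x ∈ S ↔ y ∉ S))
    (xa w : α → V) (yb : Option α → V) (xi : ∀ x y, xa x = xa y → x = y)
    (wi : ∀ x y, w x = w y → x = y) (yi : ∀ x y, yb x = yb y → x = y)
    (g : ∀ x o, (xa x, yb o) ∈ Γ) (hw : ∀ x o, c (xa x, yb o) = w x) :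
    HasBergeCopy G H := by
  classical
  have hT' : ∀ x y z, G.Adj x y → G.Adj x z → G.Adj y z → False := by
    intro x y z h1 h2 h3
    exact hT {x, y, z} (SimpleGraph.is3Clique_triple_iff.mpr ⟨h1, h2, h3⟩)
  let st : Setoid α := ⟨fun x y => x = y ∨ M x y, ⟨fun x => Or.inl rfl,
    fun {x y} h => h.elim (fun h => Or.inl h.symm) (fun h => Or.inr (Ms _ _ h)),
    fun {x y z} h1 h2 => by
      rcases h1 with rfl | h1
      · exact h2
      · rcases h2 with rfl | h2
        · exact Or.inr h1
        · exact Or.inl (Mu y x z (Ms _ _ h1) h2)⟩⟩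
  obtain ⟨rep, hrep1, hrep2⟩ : ∃ rep : α → α, (∀ x, rep x = x ∨ M (rep x) x) ∧
      ∀ x y, M x y → rep x = rep y := by
    refine ⟨fun x => (Quotient.mk st x).out, fun x => ?_, fun x y hxy => ?_⟩
    · exact Quotient.mk_out (s := st) x
    · have : Quotient.mk st x = Quotient.mk st y := Quotient.sound (Or.inr hxy)
      simp only [this]
  have hrep3 : ∀ x y, rep x = rep y → x = y ∨ M x y := by
    intro x y e
    rcases hrep1 x with h1 | h1 <;> rcases hrep1 y with h2 | h2
    · left; rw [← h1, e, h2]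
    · right; rw [← e, h1] at h2; exact h2
    · right; rw [e, h2] at h1; exact Ms _ _ h1
    · left; rw [e] at h1; exact Mu _ _ _ h1 h2
  have hxf : ∀ x, f (xa x) = a := fun x => h.fa _ (g x none)
  have hyf : ∀ x, f (yb (some x)) = b := fun x => h.fb _ (g x (some x))
  have hwf : ∀ x, f (w x) = d := fun x => by rw [← hw x none]; exact h.fd _ (g x none)
  have xy : ∀ x y, xa x ≠ yb (some y) := fun x y e => h.ab (by rw [← hxf x, e, hyf])
  have xw : ∀ x y, xa x ≠ w y := fun x y e => h.ad (by rw [← hxf x, e, hwf])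
  have yw : ∀ x y, yb (some x) ≠ w y := fun x y e => h.bd (by rw [← hyf x, e, hwf])
  set i : α → V := fun x => if x ∈ S then (if rep x = x then xa (rep x) else w (rep x))
    else yb (some x) with hi
  set Q : α → α → V × V := fun u v => if M u v then (xa (rep u), yb none) else
    if u ∈ S then (xa (rep u), yb (some v)) else (xa (rep v), yb (some u)) with hQ
  have Qm : ∀ x y, Q x y ∈ Γ := by
    intro x y
    simp only [hQ]
    split_ifs <;> exact g _ _
  refine hasBerge_of i ?_ (fun x y => tri c (Q x y)) ?_ ?_ ?_ ?_
  · intro x y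
    simp only [hi]
    split_ifs with h1 h2 h3 h4 h5 h6 h7 h8
    · intro e; have := xi _ _ e; rw [← h2, this, h4]
    · intro e; exact absurd e (xw _ _)
    · intro e; exact absurd e (xy _ _)
    · intro e; exact absurd e.symm (xw _ _)
    · intro e
      have := wi _ _ e
      rcases hrep1 x with r1 | r1
      · exact absurd r1 h2
      · rcases hrep1 y with r2 | r2
        · exact absurd r2 h6
        · rw [this] at r1; exact Mu _ _ _ r1 r2
    · intro e; exact absurd e.symm (yw _ _)
    · intro e; exact absurd e.symm (xy _ _)
    · intro e; exact absurd e (yw _ _)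
    · intro e; have := yi _ _ e; simpa using this
  · intro x y hxy
    have : Q x y = Q y x := by
      simp only [hQ]
      by_cases hm : M x y
      · simp [hm, Ms _ _ hm, hrep2 _ _ hm]
      · have hm' : ¬ M y x := fun h => hm (Ms _ _ h)
        have := hS x y hxy hm
        simp only [hm, hm', if_false]
        by_cases hk : y ∈ S
        · simp [this, hk]
        · simp [this, hk]
    simp only [this]
  · intro x y hxy
    exact h.mem _ (Qm x y)
  · intro x y hxy
    by_cases hm : M x y
    · have := MS _ _ hm
      simp only [tri, hQ, hi, hm, this, if_true, hw]
      split_ifs <;> simp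
    · by_cases hk : x ∈ S
      · simp only [tri, hQ, hi, hm, hk, if_true, if_false, hw]
        split_ifs <;> simp
      · simp [tri, hQ, hi, hm, hk]
  · have key : ∀ u y u', G.Adj u y → G.Adj u' y → rep u = rep u' → u = u' := by
      intro u y u' h1 h2 e
      rcases hrep3 _ _ e with h | h
      · exact h
      · exact (hT' u u' y (MG _ _ h) h1 h2).elim
    intro x y x' y' h1 h2 e
    have e := h.inj (Qm _ _) (Qm _ _) e
    simp only [hQ] at e
    rw [Sym2.eq_iff]
    split_ifs at e with a1 a2 a3 a4 a5 a6 a7 a8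
    all_goals
      have u1 := xi _ _ (congrArg Prod.fst e)
      have u2 := yi _ _ (congrArg Prod.snd e)
    · rcases hrep3 _ _ u1 with rfl | hh
      · exact Or.inl ⟨rfl, Mu _ _ _ a1 a2⟩
      · right
        have := Mu _ _ _ a1 hh
        subst this
        exact ⟨(Mu _ _ _ a2 (Ms _ _ a1)).symm, rfl⟩
    all_goals simp only [reduceCtorEq, Option.some.injEq] at u2
    · subst u2
      exact Or.inl ⟨key _ _ _ h1 h2 u1, rfl⟩
    · subst u2
      exact Or.inr ⟨key _ _ _ h1 h2.symm u1, rfl⟩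
    · subst u2
      exact Or.inr ⟨rfl, key _ _ _ h1.symm h2 u1⟩
    · subst u2
      exact Or.inl ⟨rfl, key _ _ _ h1.symm h2.symm u1⟩

end CovTuran

namespace CovTuran

open Finset Filter

theorem card_pairs_le {n : ℕ} (Γ : Finset (Fin n × Fin n)) : (Γ.card : ℝ) ≤ (n : ℝ) ^ 2 := by
  have : Γ.card ≤ n ^ 2 := by
    have := card_le_univ Γ
    simpa [sq] using this
  exact_mod_cast this

theorem cs_fiber {n : ℕ} (Γ : Finset (Fin n × Fin n)) (g : Fin n × Fin n → Fin n) :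
    (Γ.card : ℝ) ^ 2 ≤ n * ∑ b, ((Γ.filter (fun p => g p = b)).card : ℝ) ^ 2 := by
  have h := card_eq_sum_card_fiberwise (f := g) (s := Γ) (t := univ) (by intro _ _; simp)
  have h2 := sq_sum_le_card_mul_sum_sq (s := (univ : Finset (Fin n)))
    (f := fun b => ((Γ.filter (fun p => g p = b)).card : ℝ))
  rw [h]
  push_cast
  simpa using h2

theorem step_one {n : ℕ} (Γ : Finset (Fin n × Fin n)) (F : Finset (Fin n)) (γ : ℝ) (hγ : 0 < γ)
    (hΓ : γ * (n : ℝ) ^ 2 ≤ Γ.card) (hF : 2 * (F.card : ℝ) < γ ^ 2 * n) :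
    ∃ x, x ∉ F ∧ γ ^ 2 / 2 * (n : ℝ) ^ 2 ≤ ((Γ.filter (fun p => (x, p.2) ∈ Γ)).card : ℝ) := by
  by_contra hc
  push Not at hc
  have hn : (0 : ℝ) < n := by
    by_contra h
    have : (n : ℝ) = 0 := le_antisymm (not_lt.mp h) (by positivity)
    rw [this] at hF
    have : (0 : ℝ) ≤ F.card := by positivity
    linarith
  have h1 : ∑ b, ((Γ.filter (fun p => p.2 = b)).card : ℝ) ^ 2 =
      ∑ x, ((Γ.filter (fun p => (x, p.2) ∈ Γ)).card : ℝ) := by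
    have e1 : ∀ b, ((Γ.filter (fun p => p.2 = b)).card : ℝ) ^ 2 =
        ∑ p ∈ Γ.filter (fun p => p.2 = b), ((Γ.filter (fun q => q.2 = p.2)).card : ℝ) := by
      intro b
      rw [sum_congr rfl (g := fun _ => ((Γ.filter (fun q => q.2 = b)).card : ℝ))]
      · simp [sq]
      · intro p hp; rw [(mem_filter.mp hp).2]
    simp_rw [e1]
    rw [sum_fiberwise]
    have e2 : ∀ p : Fin n × Fin n, ((Γ.filter (fun q => q.2 = p.2)).card : ℝ) =
        ∑ x, if (x, p.2) ∈ Γ then (1 : ℝ) else 0 := by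
      intro p
      rw [← sum_filter]
      simp only [sum_const, nsmul_eq_mul, mul_one]
      congr 1
      apply card_bij (fun q _ => q.1)
      · intro q hq
        have := mem_filter.mp hq
        simp [← this.2, this.1]
      · intro q hq q' hq' e
        exact Prod.ext e ((mem_filter.mp hq).2.trans (mem_filter.mp hq').2.symm)
      · intro x hx
        exact ⟨(x, p.2), by simpa using hx, rfl⟩
    simp_rw [e2]
    rw [sum_comm]
    apply sum_congr rfl
    intro x _
    rw [← sum_filter]; simp
  have h2 := cs_fiber Γ (fun p => p.2)
  rw [h1] at h2
  have h3 : ∑ x, ((Γ.filter (fun p => (x, p.2) ∈ Γ)).card : ℝ) ≤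
      ∑ x : Fin n, ((if x ∈ F then (n : ℝ) ^ 2 else 0) + γ ^ 2 / 2 * (n : ℝ) ^ 2) := by
    apply sum_le_sum
    intro x _
    split_ifs with hx
    · have := card_pairs_le (Γ.filter (fun p => (x, p.2) ∈ Γ))
      have : 0 ≤ γ ^ 2 / 2 * (n : ℝ) ^ 2 := by positivity
      linarith
    · have := (hc x hx).le
      linarith
  rw [sum_add_distrib, ← sum_filter] at h3
  simp only [sum_const, nsmul_eq_mul, filter_mem_eq_inter, univ_inter, card_univ, Fintype.card_fin] at h3
  have h4 : (γ * (n : ℝ) ^ 2) ^ 2 ≤ (Γ.card : ℝ) ^ 2 := pow_le_pow_left₀ (by positivity) hΓ 2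
  have h5 : (n : ℝ) * ∑ x, ((Γ.filter (fun p => (x, p.2) ∈ Γ)).card : ℝ) ≤
    n * (F.card * (n : ℝ) ^ 2 + n * (γ ^ 2 / 2 * (n : ℝ) ^ 2)) := by gcongr
  have h6 : (γ * (n : ℝ) ^ 2) ^ 2 ≤ n * (F.card * (n : ℝ) ^ 2 + n * (γ ^ 2 / 2 * (n : ℝ) ^ 2)) :=
    h4.trans (h2.trans h5)
  have h7 : (n : ℝ) ^ 3 * (2 * (F.card : ℝ)) < (n : ℝ) ^ 3 * (γ ^ 2 * n) := by gcongr
  nlinarith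

theorem step_many (t m : ℕ) (γ : ℝ) (hγ : 0 < γ) : ∃ γ' : ℝ, 0 < γ' ∧ ∀ᶠ n : ℕ in atTop,
    ∀ (Γ : Finset (Fin n × Fin n)) (F : Finset (Fin n)), F.card ≤ m →
      γ * (n : ℝ) ^ 2 ≤ Γ.card → ∃ X : Finset (Fin n), X.card = t ∧ Disjoint X F ∧
        γ' * (n : ℝ) ^ 2 ≤ ((Γ.filter (fun p => ∀ x ∈ X, (x, p.2) ∈ Γ)).card : ℝ) := by
  induction t with
  | zero =>
    refine ⟨γ, hγ, Eventually.of_forall fun n Γ F _ h => ⟨∅, rfl, by simp, ?_⟩⟩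
    simpa using h
  | succ t ih =>
    obtain ⟨δ, hδ, ih⟩ := ih
    refine ⟨δ ^ 2 / 2, by positivity, ?_⟩
    have hl : ∀ᶠ n : ℕ in atTop, 2 * ((m + t : ℕ) : ℝ) < δ ^ 2 * n :=
      (tendsto_natCast_atTop_atTop.const_mul_atTop (by positivity : (0 : ℝ) < δ ^ 2)).eventually_gt_atTop _
    filter_upwards [ih, hl] with n ih hl Γ F hF hΓ
    obtain ⟨X, hX, hd, hc⟩ := ih Γ F hF hΓ
    obtain ⟨x, hx, hx2⟩ := step_one _ (F ∪ X) δ hδ hc (by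
      refine lt_of_le_of_lt ?_ hl
      have : (F ∪ X).card ≤ m + t := (card_union_le _ _).trans (by omega)
      have : ((F ∪ X).card : ℝ) ≤ ((m + t : ℕ) : ℝ) := by exact_mod_cast this
      linarith)
    simp only [mem_union, not_or] at hx
    refine ⟨insert x X, by rw [card_insert_of_notMem hx.2, hX], ?_, hx2.trans ?_⟩
    · rw [disjoint_insert_left]; exact ⟨hx.1, hd⟩
    · have : ∀ s t : Finset (Fin n × Fin n), s ⊆ t → (s.card : ℝ) ≤ t.card :=
        fun s t h => by exact_mod_cast card_le_card h
      apply this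
      intro p hp
      simp only [mem_filter, mem_insert, forall_eq_or_imp] at hp ⊢
      exact ⟨hp.1.1, hp.2.1, hp.1.2⟩

theorem match_or_cover {V : Type*} [DecidableEq V] (P : Finset (V × V)) (k : ℕ) :
    (∃ M ⊆ P, M.card = k ∧ Set.InjOn Prod.fst (M : Set (V × V)) ∧
      Set.InjOn Prod.snd (M : Set (V × V))) ∨
    ∃ S T : Finset V, S.card ≤ k ∧ T.card ≤ k ∧ ∀ p ∈ P, p.1 ∈ S ∨ p.2 ∈ T := by
  induction k with
  | zero => left; exact ⟨∅, by simp, rfl, by simp, by simp⟩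
  | succ k ih =>
    rcases ih with ⟨M, hM, hc, h1, h2⟩ | ⟨S, T, hS, hT, h⟩
    · by_cases hcov : ∀ p ∈ P, p.1 ∈ M.image Prod.fst ∨ p.2 ∈ M.image Prod.snd
      · right
        exact ⟨_, _, card_image_le.trans (by omega), card_image_le.trans (by omega), hcov⟩
      · left
        push Not at hcov
        obtain ⟨p, hp, hp1, hp2⟩ := hcov
        have hpM : p ∉ M := fun h => hp1 (mem_image_of_mem _ h)
        refine ⟨insert p M, insert_subset hp hM, by rw [card_insert_of_notMem hpM, hc], ?_, ?_⟩
        · rw [coe_insert, Set.injOn_insert (by simpa using hpM)]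
          exact ⟨h1, by simpa using hp1⟩
        · rw [coe_insert, Set.injOn_insert (by simpa using hpM)]
          exact ⟨h2, by simpa using hp2⟩
    · right; exact ⟨S, T, by omega, by omega, h⟩

theorem star_sel {n : ℕ} (Γ : Finset (Fin n × Fin n)) (c : Fin n × Fin n → Fin n) (k : ℕ)
    (hk : 0 < k) (γ : ℝ) (hγ : 0 < γ) (hn : 0 < n) (S : Fin n → Finset (Fin n))
    (hS : ∀ w, (S w).card ≤ k) (hc : ∀ p ∈ Γ, p.1 ∈ S (c p)) (hΓ : γ * (n : ℝ) ^ 2 ≤ Γ.card) :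
    ∃ Γ' ⊆ Γ, (γ / k) ^ 2 * (n : ℝ) ^ 2 ≤ Γ'.card ∧
      ∀ p ∈ Γ', ∀ q ∈ Γ', (c p = c q ↔ p.1 = q.1) := by
  have : Nonempty (Fin n) := ⟨⟨0, hn⟩⟩
  have hn' : (0 : ℝ) < n := by exact_mod_cast hn
  have hk' : (0 : ℝ) < k := by exact_mod_cast hk
  have ex1 : ∀ w, ∃ s, ∀ a, ((Γ.filter (fun p => c p = w)).filter (fun p => p.1 = a)).card ≤
      ((Γ.filter (fun p => c p = w)).filter (fun p => p.1 = s)).card := by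
    intro w
    obtain ⟨s, -, hs⟩ := exists_max_image (univ : Finset (Fin n))
      (fun a => ((Γ.filter (fun p => c p = w)).filter (fun p => p.1 = a)).card) univ_nonempty
    exact ⟨s, fun a => hs a (mem_univ _)⟩
  choose s hs using ex1
  set Γ1 := Γ.filter (fun p => p.1 = s (c p)) with hΓ1
  have b1 : Γ.card ≤ k * Γ1.card := by
    rw [card_eq_sum_card_fiberwise (f := c) (s := Γ) (t := univ) (by intro _ _; simp),
      card_eq_sum_card_fiberwise (f := c) (s := Γ1) (t := univ) (by intro _ _; simp), mul_sum]
    apply sum_le_sum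
    intro w _
    have e : Γ1.filter (fun p => c p = w) =
        (Γ.filter (fun p => c p = w)).filter (fun p => p.1 = s w) := by
      ext p
      simp only [hΓ1, mem_filter]
      constructor
      · rintro ⟨⟨h1, h2⟩, h3⟩; exact ⟨⟨h1, h3⟩, by rw [h2, h3]⟩
      · rintro ⟨⟨h1, h2⟩, h3⟩; exact ⟨⟨h1, by rw [h3, h2]⟩, h2⟩
    rw [e, card_eq_sum_card_fiberwise (f := Prod.fst) (s := Γ.filter (fun p => c p = w)) (t := S w)
      (by
        intro p hp
        simp only [coe_filter, Set.mem_ofPred_eq] at hp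
        rw [← hp.2]; exact hc p hp.1)]
    calc _ ≤ ∑ a ∈ S w, _ := sum_le_sum (fun a _ => hs w a)
      _ ≤ _ := by
        rw [sum_const, smul_eq_mul]
        exact Nat.mul_le_mul_right _ (hS w)
  have ex2 : ∀ a, ∃ v, ∀ w, ((Γ1.filter (fun p => p.1 = a)).filter (fun p => c p = w)).card ≤
      ((Γ1.filter (fun p => p.1 = a)).filter (fun p => c p = v)).card := by
    intro a
    obtain ⟨s, -, hs⟩ := exists_max_image (univ : Finset (Fin n))
      (fun w => ((Γ1.filter (fun p => p.1 = a)).filter (fun p => c p = w)).card) univ_nonempty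
    exact ⟨s, fun a => hs a (mem_univ _)⟩
  choose v hv using ex2
  set Γ2 := Γ1.filter (fun p => c p = v p.1) with hΓ2
  have b2 : ∑ w, (Γ1.filter (fun p => c p = w)).card ^ 2 ≤ n * Γ2.card := by
    have e1 : ∀ w, (Γ1.filter (fun p => c p = w)).card ^ 2 =
        ∑ p ∈ Γ1.filter (fun p => c p = w), (Γ1.filter (fun q => c q = c p)).card := by
      intro b
      rw [sum_congr rfl (g := fun _ => (Γ1.filter (fun q => c q = b)).card)]
      · simp [sq]
      · intro p hp; rw [(mem_filter.mp hp).2]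
    have e2 : ∀ a, (Γ2.filter (fun p => p.1 = a)) =
        ((Γ1.filter (fun p => p.1 = a)).filter (fun p => c p = v a)) := by
      intro a
      ext p
      simp only [hΓ2, mem_filter]
      constructor
      · rintro ⟨⟨h1, h2⟩, h3⟩; exact ⟨⟨h1, h3⟩, by rw [h2, h3]⟩
      · rintro ⟨⟨h1, h2⟩, h3⟩; exact ⟨⟨h1, by rw [h3, h2]⟩, h2⟩
    simp_rw [e1]
    rw [sum_fiberwise, ← sum_fiberwise Γ1 (fun p => p.1)]
    rw [card_eq_sum_card_fiberwise (f := Prod.fst) (s := Γ2) (t := univ) (by intro _ _; simp), mul_sum]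
    apply sum_le_sum
    intro a _
    have hle : (Γ1.filter (fun p => p.1 = a)).card ≤ n := by
      have : (Γ1.filter (fun p => p.1 = a)).card ≤ (univ : Finset (Fin n)).card := by
        apply card_le_card_of_injOn (fun p => p.2)
        · intro _ _; simp
        · intro p hp q hq e
          simp only [coe_filter, Set.mem_ofPred_eq] at hp hq
          exact Prod.ext (hp.2.trans hq.2.symm) e
      simpa using this
    calc _ ≤ ∑ p ∈ Γ1.filter (fun p => p.1 = a), (Γ2.filter (fun p => p.1 = a)).card := by
          apply sum_le_sum
          intro p hp
          rw [e2]
          refine le_trans (card_le_card ?_) (hv a (c p))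
          intro q hq
          simp only [mem_filter] at hq hp ⊢
          refine ⟨⟨hq.1, ?_⟩, hq.2⟩
          have q1 := (mem_filter.mp hq.1).2
          have q2 := (mem_filter.mp hp.1).2
          rw [q1, hq.2, ← q2, hp.2]
      _ ≤ _ := by
        rw [sum_const, smul_eq_mul]
        exact Nat.mul_le_mul_right _ hle
  refine ⟨Γ2, (filter_subset _ _).trans (filter_subset _ _), ?_, ?_⟩
  · have c1 := cs_fiber Γ1 c
    have c2 : (∑ w, ((Γ1.filter (fun p => c p = w)).card : ℝ) ^ 2) ≤ n * Γ2.card := by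
      exact_mod_cast b2
    have c3 : (Γ.card : ℝ) ≤ k * Γ1.card := by exact_mod_cast b1
    have c4 : γ / k * (n : ℝ) ^ 2 ≤ Γ1.card := by
      rw [div_mul_eq_mul_div, div_le_iff₀ hk']; linarith
    have c5 : (γ / k * (n : ℝ) ^ 2) ^ 2 ≤ (Γ1.card : ℝ) ^ 2 :=
      pow_le_pow_left₀ (by positivity) c4 2
    have c6 : (n : ℝ) * (∑ w, ((Γ1.filter (fun p => c p = w)).card : ℝ) ^ 2) ≤ n * (n * Γ2.card) := by
      gcongr
    have c7 := c5.trans (c1.trans c6)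
    have : (n : ℝ) ^ 2 * ((γ / k) ^ 2 * (n : ℝ) ^ 2) ≤ (n : ℝ) ^ 2 * Γ2.card := by nlinarith
    exact le_of_mul_le_mul_left this (by positivity)
  · intro p hp q hq
    have p2 := (mem_filter.mp hp).2
    have q2 := (mem_filter.mp hq).2
    have p1 := (mem_filter.mp (mem_filter.mp hp).1).2
    have q1 := (mem_filter.mp (mem_filter.mp hq).1).2
    constructor
    · intro e; rw [p1, q1, e]
    · intro e; rw [p2, q2, e]

theorem count_good {n : ℕ} (x y z : Fin n) (hxy : x ≠ y) (hxz : x ≠ z) (hyz : y ≠ z) :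
    Fintype.card (Fin n → Fin 3) ≤
      27 * (univ.filter (fun f : Fin n → Fin 3 => f x = 0 ∧ f y = 1 ∧ f z = 2)).card := by
  classical
  have h : (univ : Finset (Fin n → Fin 3)).card ≤
      ((univ : Finset (Fin 3 × Fin 3 × Fin 3)) ×ˢ
        (univ.filter (fun f : Fin n → Fin 3 => f x = 0 ∧ f y = 1 ∧ f z = 2))).card := by
    apply card_le_card_of_injOn (fun f => ((f x, f y, f z),
      Function.update (Function.update (Function.update f x 0) y 1) z 2))
    · intro f _
      simp [hxy, hxz, hyz, Function.update_of_ne]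
    · intro f _ g _ e
      simp only [Prod.mk.injEq] at e
      obtain ⟨⟨e1, e2, e3⟩, e4⟩ := e
      ext1 u
      by_cases hx : u = x
      · rw [hx, e1]
      by_cases hy : u = y
      · rw [hy, e2]
      by_cases hz : u = z
      · rw [hz, e3]
      have := congrFun e4 u
      simpa [Function.update_of_ne, hx, hy, hz] using this
  rw [card_product] at h
  simpa using h

theorem rainbow {n : ℕ} (H : Finset (Finset (Fin n))) (hH : ∀ h ∈ H, h.card = 3) :
    ∃ (f : Fin n → Fin 3) (c : Fin n × Fin n → Fin n) (Γ : Finset (Fin n × Fin n)),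
      Rb H f 0 1 2 c Γ ∧ (covPairs H).card ≤ 27 * Γ.card := by
  classical
  by_cases hemp : covPairs H = ∅
  · refine ⟨fun _ => 0, Prod.fst, ∅, ⟨by decide, by decide, by decide, ?_, ?_, ?_, ?_⟩, ?_⟩
    all_goals simp [hemp]
  have ex0 : ∀ e ∈ covPairs H, ∃ t : Fin n × Fin n × Fin n,
      e = {t.1, t.2.1} ∧ {t.1, t.2.1, t.2.2} ∈ H ∧ t.1 ≠ t.2.1 ∧ t.1 ≠ t.2.2 ∧ t.2.1 ≠ t.2.2 := by
    intro e he
    unfold covPairs at he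
    obtain ⟨h, hh, he2⟩ := mem_biUnion.mp he
    obtain ⟨hs, hc⟩ := mem_powersetCard.mp he2
    obtain ⟨x, y, hxy, rfl⟩ := card_eq_two.mp hc
    have : (h \ {x, y}).card = 1 := by rw [card_sdiff_of_subset hs, hc, hH h hh]
    obtain ⟨z, hz⟩ := card_eq_one.mp this
    have hz' : z ∈ h \ {x, y} := by rw [hz]; simp
    simp only [Finset.mem_sdiff, mem_insert, mem_singleton, not_or] at hz'
    refine ⟨(x, y, z), rfl, ?_, hxy, Ne.symm hz'.2.1, Ne.symm hz'.2.2⟩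
    have : h = {x, y, z} := by
      rw [← sdiff_union_of_subset hs, hz]
      ext u; simp; tauto
    rw [← this]; exact hh
  have ne : Nonempty (Fin n × Fin n × Fin n) := by
    obtain ⟨e, he⟩ := nonempty_iff_ne_empty.mpr hemp
    obtain ⟨t, -⟩ := ex0 e he
    exact ⟨t⟩
  have ex : ∀ e : Finset (Fin n), ∃ t : Fin n × Fin n × Fin n, e ∈ covPairs H →
      e = {t.1, t.2.1} ∧ {t.1, t.2.1, t.2.2} ∈ H ∧ t.1 ≠ t.2.1 ∧ t.1 ≠ t.2.2 ∧ t.2.1 ≠ t.2.2 := by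
    intro e
    by_cases he : e ∈ covPairs H
    · obtain ⟨t, ht⟩ := ex0 e he
      exact ⟨t, fun _ => ht⟩
    · exact ⟨ne.some, fun h => absurd h he⟩
  choose t ht using ex
  let good : Finset (Fin n) → (Fin n → Fin 3) → Prop :=
    fun e f => f (t e).1 = 0 ∧ f (t e).2.1 = 1 ∧ f (t e).2.2 = 2
  obtain ⟨f, -, hf⟩ : ∃ f ∈ (univ : Finset (Fin n → Fin 3)),
      (covPairs H).card ≤ 27 * ((covPairs H).filter (fun e => good e f)).card := by
    apply exists_le_of_sum_le univ_nonempty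
    rw [sum_const, smul_eq_mul, ← mul_sum]
    have : ∑ f : Fin n → Fin 3, ((covPairs H).filter (fun e => good e f)).card =
        ∑ e ∈ covPairs H, (univ.filter (fun f => good e f)).card := by
      simp_rw [card_filter]
      rw [sum_comm]
    rw [this, mul_sum, mul_comm, ← smul_eq_mul, ← sum_const]
    apply sum_le_sum
    intro e he
    obtain ⟨-, -, h1, h2, h3⟩ := ht e he
    exact count_good _ _ _ h1 h2 h3
  have key : ∀ e ∈ covPairs H, (t {(t e).1, (t e).2.1}) = t e := by
    intro e he
    rw [← (ht e he).1]
  refine ⟨f, fun p => (t {p.1, p.2}).2.2,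
    ((covPairs H).filter (fun e => good e f)).image (fun e => ((t e).1, (t e).2.1)),
    ⟨by decide, by decide, by decide, ?_, ?_, ?_, ?_⟩, ?_⟩
  · intro p hp
    obtain ⟨e, he, rfl⟩ := mem_image.mp hp
    exact (mem_filter.mp he).2.1
  · intro p hp
    obtain ⟨e, he, rfl⟩ := mem_image.mp hp
    exact (mem_filter.mp he).2.2.1
  · intro p hp
    obtain ⟨e, he, rfl⟩ := mem_image.mp hp
    have := key e (mem_filter.mp he).1
    simp only [this]
    exact (mem_filter.mp he).2.2.2
  · intro p hp
    obtain ⟨e, he, rfl⟩ := mem_image.mp hp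
    have := key e (mem_filter.mp he).1
    simp only [tri, this]
    exact (ht e (mem_filter.mp he).1).2.1
  · rw [card_image_of_injOn]
    · exact hf
    · intro e he e' he' h
      simp only [coe_filter, Set.mem_ofPred_eq] at he he'
      simp only [Prod.mk.injEq] at h
      rw [(ht e he.1).1, (ht e' he'.1).1, h.1, h.2]

end CovTuran

namespace CovTuran

open Finset Filter

theorem Rb.swap {V : Type*} [DecidableEq V] {H : Finset (Finset V)} {f : V → Fin 3} {a b d : Fin 3}
    {c : V × V → V} {Γ : Finset (V × V)} (h : Rb H f a b d c Γ) :
    Rb H f b a d (c ∘ Prod.swap) (Γ.image Prod.swap) := by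
  refine ⟨h.ab.symm, h.bd, h.ad, ?_, ?_, ?_, ?_⟩
  · intro p hp
    obtain ⟨q, hq, rfl⟩ := mem_image.mp hp
    exact h.fb q hq
  · intro p hp
    obtain ⟨q, hq, rfl⟩ := mem_image.mp hp
    exact h.fa q hq
  · intro p hp
    obtain ⟨q, hq, rfl⟩ := mem_image.mp hp
    exact h.fd q hq
  · intro p hp
    obtain ⟨q, hq, rfl⟩ := mem_image.mp hp
    have := h.mem q hq
    simp only [tri, Function.comp, Prod.swap_swap, Prod.fst_swap, Prod.snd_swap] at this ⊢
    rw [insert_comm]; exact this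

theorem ev_gt (C δ : ℝ) (hδ : 0 < δ) : ∀ᶠ n : ℕ in atTop, C < δ * n :=
  (tendsto_natCast_atTop_atTop.const_mul_atTop hδ).eventually_gt_atTop _

theorem emb_into {α V : Type*} [Fintype α] (s : Finset V) (h : Fintype.card α ≤ s.card) :
    ∃ g : α → V, Function.Injective g ∧ ∀ x, g x ∈ s := by
  classical
  have : Nonempty (α ↪ s) := Function.Embedding.nonempty_of_card_le (by simpa using h)
  obtain ⟨g⟩ := this
  exact ⟨fun x => g x, fun x y e => g.injective (Subtype.ext e), fun x => (g x).2⟩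

theorem card_filter_snd_le {n : ℕ} (Γ : Finset (Fin n × Fin n)) (Y : Finset (Fin n))
    (h : ∀ p ∈ Γ, p.2 ∈ Y) : (Γ.card : ℝ) ≤ n * Y.card := by
  have : Γ.card ≤ n * Y.card := by
    have : Γ ⊆ univ ×ˢ Y := by
      intro p hp; simp [h p hp]
    simpa using card_le_card this
  exact_mod_cast this

theorem card_filter_fst_le {n : ℕ} (Γ : Finset (Fin n × Fin n)) (Y : Finset (Fin n))
    (h : ∀ p ∈ Γ, p.1 ∈ Y) : (Γ.card : ℝ) ≤ n * Y.card := by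
  have : Γ.card ≤ n * Y.card := by
    have : Γ ⊆ Y ×ˢ univ := by
      intro p hp; simp [h p hp]
    simpa [mul_comm] using card_le_card this
  exact_mod_cast this

theorem star_case {α : Type*} [Fintype α] [Nonempty α] (G : SimpleGraph α) (hG : DegenerateCond G)
    (γ : ℝ) (hγ : 0 < γ) : ∀ᶠ n : ℕ in atTop, ∀ (H : Finset (Finset (Fin n))) (f : Fin n → Fin 3)
      (a b d : Fin 3) (c : Fin n × Fin n → Fin n) (Γ : Finset (Fin n × Fin n))
      (S : Fin n → Finset (Fin n)), Rb H f a b d c Γ → (∀ w, (S w).card ≤ Fintype.card α) →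
      (∀ p ∈ Γ, p.1 ∈ S (c p)) → γ * (n : ℝ) ^ 2 ≤ Γ.card → HasBergeCopy G H := by
  classical
  set k := Fintype.card α with hk
  have hk0 : 0 < k := Fintype.card_pos
  have hk0' : (0 : ℝ) < k := by exact_mod_cast hk0
  obtain ⟨δ, hδ, hev⟩ := step_many k 0 ((γ / k) ^ 2) (by positivity)
  filter_upwards [hev, ev_gt (k + 1) δ hδ, eventually_gt_atTop 0] with n hev hn hn0
    H f a b d c Γ S hR hS hcS hΓ
  have hn0' : (0 : ℝ) < n := by exact_mod_cast hn0
  obtain ⟨Γ', hs, hc, hiff⟩ := star_sel Γ c k hk0 γ hγ hn0 S hS hcS hΓ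
  obtain ⟨X, hX, -, hXc⟩ := hev Γ' ∅ (by simp) hc
  set Γ2 := Γ'.filter (fun p => ∀ x ∈ X, (x, p.2) ∈ Γ') with hΓ2
  set Y := Γ2.image Prod.snd with hY
  have hYc : k + 1 ≤ Y.card := by
    have h1 := card_filter_snd_le Γ2 Y (fun p hp => mem_image_of_mem _ hp)
    have h2 : (n : ℝ) * (k + 1) < n * Y.card := by
      calc (n : ℝ) * (k + 1) < n * (δ * n) := by gcongr
        _ = δ * (n : ℝ) ^ 2 := by ring
        _ ≤ _ := hXc.trans h1
    have h3 := lt_of_mul_lt_mul_left h2 hn0'.le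
    have h4 : k + 1 < Y.card := by exact_mod_cast h3
    exact h4.le
  obtain ⟨xa, xi, xm⟩ := emb_into (α := α) X (by rw [hX])
  obtain ⟨yb, yi, ym⟩ := emb_into (α := Option α) Y (by simpa using hYc)
  have g : ∀ x o, (xa x, yb o) ∈ Γ' := by
    intro x o
    obtain ⟨p, hp, e⟩ := mem_image.mp (ym o)
    rw [← e]
    exact (mem_filter.mp hp).2 _ (xm x)
  obtain ⟨⟨hT, -⟩, B, U, hB, hBU, S', hS', hM1, hM2⟩ := hG
  have hS'2 : ∀ u v, B.Adj u v → (u ∈ S' ↔ v ∉ S') := by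
    intro u v huv
    have := hBU u v huv
    rcases hS' with rfl | rfl
    · exact this
    · simp only [Set.mem_compl_iff]; tauto
  have hmem : ∀ x y, G.Adj x y ∧ ¬ B.Adj x y → s(x, y) ∈ G.edgeSet \ B.edgeSet := by
    intro x y h
    exact ⟨h.1, h.2⟩
  refine embed_star G (hR.mono hs) hT S' (fun x y => G.Adj x y ∧ ¬ B.Adj x y) ?_ ?_ ?_ ?_ ?_
    xa (fun x => c (xa x, yb none)) yb (fun x y e => xi e) ?_ (fun x y e => yi e) g ?_
  · exact fun x y h => ⟨h.1.symm, fun h' => h.2 h'.symm⟩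
  · exact fun x y h => hM1 _ (hmem x y h) x (by simp)
  · intro x y z h1 h2
    by_contra hne
    exact hM2 _ (hmem x y h1) _ (hmem x z h2) (fun e => hne (Sym2.congr_right.mp e)) x (by simp) (by simp)
  · exact fun x y h => h.1
  · intro x y h1 h2
    apply hS'2
    by_contra h3
    exact h2 ⟨h1, h3⟩
  · intro x y e
    exact xi ((hiff _ (g x none) _ (g y none)).mp e)
  · intro x o
    exact (hiff _ (g x o) _ (g x none)).mpr rfl

theorem degenerate_le {α : Type*} [Fintype α] [Nonempty α] (G : SimpleGraph α)
    (hG : DegenerateCond G) : coverTuranDensity 3 G ≤ 0 := by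
  classical
  apply density_le G 0 le_rfl
  intro ε hε
  set k := Fintype.card α with hk
  obtain ⟨γ1, hγ1, ev1⟩ := step_many k 0 (ε / 108) (by positivity)
  obtain ⟨γ2, hγ2, ev2⟩ := step_many k 0 γ1 hγ1
  filter_upwards [ev1, ev2, ev_gt (4 * k) γ2 hγ2, star_case G hG (γ2 / 4) (by positivity),
    eventually_ge_atTop 2] with n ev1 ev2 ev3 hst hn2 H hH hcov
  have hn2' : (2 : ℝ) ≤ n := by exact_mod_cast hn2
  obtain ⟨f, c, Γ, hR, hΓ⟩ := rainbow H hH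
  have hΓc : ε / 108 * (n : ℝ) ^ 2 ≤ Γ.card := by
    have h1 : ((covPairs H).card : ℝ) ≤ 27 * Γ.card := by exact_mod_cast hΓ
    rw [Nat.cast_choose_two] at hcov
    have h2 : (n : ℝ) ^ 2 / 4 ≤ n * (n - 1) / 2 := by nlinarith
    have h3 : ε * ((n : ℝ) ^ 2 / 4) ≤ ε * (n * (n - 1) / 2) := by gcongr
    linarith
  obtain ⟨X, hX, -, hXc⟩ := ev1 Γ ∅ (by simp) hΓc
  set Γ1 := Γ.filter (fun p => ∀ x ∈ X, (x, p.2) ∈ Γ) with hΓ1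
  have hsw : ∀ s : Finset (Fin n × Fin n), (s.image Prod.swap).card = s.card :=
    fun s => card_image_of_injective _ Prod.swap_injective
  obtain ⟨Y, hY, -, hYc⟩ := ev2 (Γ1.image Prod.swap) ∅ (by simp) (by rw [hsw]; exact hXc)
  set Γ2 := Γ1.filter (fun p => ∀ y ∈ Y, (p.1, y) ∈ Γ1) with hΓ2
  have hms : ∀ x y, (x, y) ∈ Γ1.image Prod.swap ↔ (y, x) ∈ Γ1 := by
    intro x y
    constructor
    · intro h
      obtain ⟨q, hq, e⟩ := mem_image.mp h
      have : q = (y, x) := by rw [← Prod.swap_swap q, e]; rfl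
      rwa [← this]
    · intro h
      exact mem_image.mpr ⟨(y, x), h, rfl⟩
  have hcardtwo : γ2 * (n : ℝ) ^ 2 ≤ Γ2.card := by
    have : (Γ1.image Prod.swap).filter (fun p => ∀ x ∈ Y, (x, p.2) ∈ Γ1.image Prod.swap) =
        Γ2.image Prod.swap := by
      ext ⟨x, y⟩
      simp only [mem_filter, hms]
      constructor
      · intro h
        exact mem_image.mpr ⟨(y, x), mem_filter.mpr h, rfl⟩
      · intro h
        obtain ⟨q, hq, e⟩ := mem_image.mp h
        have : q = (y, x) := by rw [← Prod.swap_swap q, e]; rfl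
        rw [this] at hq
        exact mem_filter.mp hq
    rw [this, hsw] at hYc
    exact hYc
  set Γ3 := Γ2.filter (fun p => p.1 ∉ X ∧ p.2 ∉ Y) with hΓ3
  have hcardthree : γ2 / 2 * (n : ℝ) ^ 2 ≤ Γ3.card := by
    have h1 := card_filter_fst_le (Γ2.filter (fun p => p.1 ∈ X)) X (fun p hp => (mem_filter.mp hp).2)
    have h2 := card_filter_snd_le (Γ2.filter (fun p => p.2 ∈ Y)) Y (fun p hp => (mem_filter.mp hp).2)
    have h3 : Γ2.card ≤ Γ3.card + (Γ2.filter (fun p => p.1 ∈ X)).card +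
        (Γ2.filter (fun p => p.2 ∈ Y)).card := by
      refine le_trans (card_le_card ?_) ((card_union_le _ _).trans
        (Nat.add_le_add_right (card_union_le _ _) _))
      intro p hp
      simp only [mem_union, mem_filter, hΓ3]
      tauto
    have h4 : (Γ2.card : ℝ) ≤ Γ3.card + (Γ2.filter (fun p => p.1 ∈ X)).card +
        (Γ2.filter (fun p => p.2 ∈ Y)).card := by exact_mod_cast h3
    rw [hX] at h1
    rw [hY] at h2
    have h5 : (n : ℝ) * (4 * k) ≤ n * (γ2 * n) := by gcongr
    nlinarith
  have hnethree : Γ3.Nonempty := by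
    rw [← card_pos]
    have : (0 : ℝ) < Γ3.card := lt_of_lt_of_le (by positivity) hcardthree
    exact_mod_cast this
  have s3 : Γ3 ⊆ Γ := (filter_subset _ _).trans ((filter_subset _ _).trans (filter_subset _ _))
  have hXp : ∀ p ∈ Γ3, ∀ x ∈ X, (x, p.2) ∈ Γ := fun p hp =>
    (mem_filter.mp (mem_filter.mp (mem_filter.mp hp).1).1).2
  have hYp : ∀ p ∈ Γ3, ∀ y ∈ Y, (p.1, y) ∈ Γ1 := fun p hp =>
    (mem_filter.mp (mem_filter.mp hp).1).2
  have hXY : ∀ x ∈ X, ∀ y ∈ Y, (x, y) ∈ Γ := by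
    intro x hx y hy
    obtain ⟨p, hp⟩ := hnethree
    exact (mem_filter.mp (hYp p hp y hy)).2 x hx
  by_cases hmat : ∃ w, ∃ M ⊆ Γ3.filter (fun p => c p = w), M.card = k ∧
      Set.InjOn Prod.fst (M : Set (Fin n × Fin n)) ∧ Set.InjOn Prod.snd (M : Set (Fin n × Fin n))
  · obtain ⟨w, M, hM, hMk, hM1, hM2⟩ := hmat
    obtain ⟨m, mi, mm⟩ := emb_into (α := α) M (by rw [hMk])
    obtain ⟨xs, xi, xm⟩ := emb_into (α := α) X (by rw [hX])
    obtain ⟨ys, yi, ym⟩ := emb_into (α := α) Y (by rw [hY])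
    have m3 : ∀ x, m x ∈ Γ3 := fun x => (mem_filter.mp (hM (mm x))).1
    obtain ⟨⟨hT, v, ⟨κ⟩⟩, -⟩ := hG
    refine embed_apex G hR hT v (fun x => ∃ h : x ≠ v, κ ⟨x, h⟩ = 0) ?_ w m (fun x => s3 (m3 x))
      (fun x => (mem_filter.mp (hM (mm x))).2)
      (fun x y e => mi (hM1 (mm x) (mm y) e)) (fun x y e => mi (hM2 (mm x) (mm y) e)) xs ys
      (fun x y e => xi e) (fun x y e => yi e) (fun x y => hXY _ (xm x) _ (ym y))
      (fun x y => (mem_filter.mp (hYp _ (m3 x) _ (ym y))).1) (fun x y => hXp _ (m3 y) _ (xm x)) ?_ ?_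
    · intro x y hxy hx hy
      have : κ ⟨x, hx⟩ ≠ κ ⟨y, hy⟩ := κ.valid hxy
      simp only [ne_eq, hx, hy, not_false_eq_true, exists_true_left]
      revert this
      generalize κ ⟨x, hx⟩ = p
      generalize κ ⟨y, hy⟩ = q
      revert p q
      decide
    · intro x y e
      exact (mem_filter.mp (m3 y)).2.1 (e ▸ xm x)
    · intro x y e
      exact (mem_filter.mp (m3 y)).2.2 (e ▸ ym x)
  · have hcv : ∀ w, ∃ S T : Finset (Fin n), S.card ≤ k ∧ T.card ≤ k ∧
        ∀ p ∈ Γ3.filter (fun p => c p = w), p.1 ∈ S ∨ p.2 ∈ T := by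
      intro w
      rcases match_or_cover (Γ3.filter (fun p => c p = w)) k with h | h
      · exact absurd ⟨w, h⟩ hmat
      · exact h
    choose S T hS hT hST using hcv
    set ΓA := Γ3.filter (fun p => p.1 ∈ S (c p)) with hΓA
    set ΓB := Γ3.filter (fun p => p.2 ∈ T (c p)) with hΓB
    have h1 : Γ3.card ≤ ΓA.card + ΓB.card := by
      refine le_trans (card_le_card ?_) (card_union_le _ _)
      intro p hp
      have := hST (c p) p (mem_filter.mpr ⟨hp, rfl⟩)
      simp only [hΓA, hΓB, mem_union, mem_filter]
      tauto
    have h2 : (Γ3.card : ℝ) ≤ ΓA.card + ΓB.card := by exact_mod_cast h1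
    by_cases hA : γ2 / 4 * (n : ℝ) ^ 2 ≤ ΓA.card
    · exact hst H f 0 1 2 c ΓA S (hR.mono ((filter_subset _ _).trans s3)) hS
        (fun p hp => (mem_filter.mp hp).2) hA
    · have hB : γ2 / 4 * (n : ℝ) ^ 2 ≤ ΓB.card := by linarith
      refine hst H f 1 0 2 (c ∘ Prod.swap) (ΓB.image Prod.swap) T
        (hR.mono ((filter_subset _ _).trans s3)).swap hT ?_ (by rw [hsw]; exact hB)
      intro p hp
      obtain ⟨q, hq, rfl⟩ := mem_image.mp hp
      simpa using (mem_filter.mp hq).2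

end CovTuran

theorem stmt8 {α : Type*} [Fintype α] (G : SimpleGraph α)
    (hE : G.edgeSet.Nonempty) (χ : ℕ) (hχ : G.chromaticNumber = (χ : ℕ∞)) :
    (4 ≤ χ → coverTuranDensity 3 G = 1 - 1 / ((χ : ℝ) - 1)) ∧
    (DegenerateCond G → coverTuranDensity 3 G = 0) ∧
    (χ < 4 → ¬ DegenerateCond G → coverTuranDensity 3 G = 1 / 2) := by
  have hne : Nonempty α := by
    obtain ⟨e, -⟩ := hE
    induction e using Sym2.ind with
    | _ x y => exact ⟨x⟩
  have hcol : G.Colorable χ := SimpleGraph.chromaticNumber_le_iff_colorable.mp hχ.le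
  refine ⟨fun h4 => ?_, fun hD => ?_, fun h4 hD => ?_⟩
  · obtain ⟨r, rfl⟩ : ∃ r, χ = r + 1 := ⟨χ - 1, by omega⟩
    have e : (((r + 1 : ℕ) : ℝ) - 1) = r := by push_cast; ring
    rw [e]
    apply le_antisymm
    · exact CovTuran.density_le_colorable G r (by omega) hcol
    · apply CovTuran.lower_turan G r (by omega)
      intro hc
      have := SimpleGraph.chromaticNumber_le_iff_colorable.mpr hc
      rw [hχ] at this
      have : r + 1 ≤ r := by exact_mod_cast this
      omega
  · exact le_antisymm (CovTuran.degenerate_le G hD) (CovTuran.density_nonneg G)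
  · apply le_antisymm
    · have := CovTuran.density_le_colorable G 2 (by omega) (hcol.mono (by omega))
      norm_num at this ⊢
      linarith
    · by_cases h1 : ∃ v : α, (G.induce ({v}ᶜ : Set α)).Colorable 2
      · apply CovTuran.lower_match G
        rintro ⟨h2, h3⟩
        exact hD ⟨⟨h2, h1⟩, h3⟩
      · exact CovTuran.lower_apex G h1
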